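/- Let d = 2, let r ≥ 8 be a prime, and let N = 3(r−1). Let f : Δ_N → ℝ² be an affine map on the standard N-simplex whose N+1 vertices are colored with 4 colors with color classes satisfying |C_0| = |C_1| = |C_2| = r−1 and |C_3| = 1, and suppose the N+1 image points f(v) of the vertices are in general position. Then T(f) ≥ 8 · 3^{r−8}. -/

import Mathlib

open scoped Classical

/-- A set of points in `ℝ^d` is in *general position* if for every `j < d`,
no `j + 2` of the points lie on a common `j`-dimensional affine subspace. -/
def GenPos (d : ℕ) (P : Set (Fin d → ℝ)) : Prop :=
  ∀ j < d, ∀ S : Finset (Fin d → ℝ), ↑S ⊆ P → S.card = j + 2 →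
    ¬ ∃ A : AffineSubspace ℝ (Fin d → ℝ),
        Module.finrank ℝ A.direction = j ∧ (S : Set (Fin d → ℝ)) ⊆ (A : Set (Fin d → ℝ))

/-- `tverbergCount d N r f c` is the number of unordered colored Tverberg partitions for the
affine map `f` on the standard `N`-simplex (vertex `i` being `Pi.single i 1`), whose vertices
are colored by `c` with `d + 2` colors: partitions of the `N + 1` vertices into `r` rainbow
blocks whose images under `f` have intersecting convex hulls. -/
noncomputable def tverbergCount (d N r : ℕ) (f : (Fin (N + 1) → ℝ) →ᵃ[ℝ] (Fin d → ℝ))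
    (c : Fin (N + 1) → Fin (d + 2)) : ℕ :=
  Set.ncard { P : Finset (Finset (Fin (N + 1))) |
    P.card = r ∧
    (∀ B ∈ P, ∀ B' ∈ P, B ≠ B' → Disjoint B B') ∧
    P.biUnion id = Finset.univ ∧
    (∀ B ∈ P, ∀ j : Fin (d + 2), (B.filter fun i => c i = j).card ≤ 1) ∧
    ∃ x : Fin d → ℝ, ∀ B ∈ P,
      x ∈ convexHull ℝ ((fun i => f (Pi.single i 1)) '' (B : Set (Fin (N + 1)))) }


section Birch
open Finset
variable {ι : Type*} [Fintype ι] [DecidableEq ι]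

/-- The indicator of `I` splits modulo two as a sum of functions of two variables. -/
def ParityDec (I : ι → ι → ι → Prop) : Prop :=
  ∃ α β γ : ι → ι → ZMod 2, ∀ i j l, (if I i j l then (1 : ZMod 2) else 0) = α i j + β j l + γ l i

/-- Pairs of permutations supported on `S` giving a matching inside `I`. -/
noncomputable def Sol (I : ι → ι → ι → Prop) (S : Finset ι) :
    Finset (Equiv.Perm ι × Equiv.Perm ι) :=
  univ.filter fun q => (∀ i, i ∉ S → q.1 i = i ∧ q.2 i = i) ∧ ∀ i ∈ S, I i (q.1 i) (q.2 i)

lemma mem_Sol {I : ι → ι → ι → Prop} {S : Finset ι} {q : Equiv.Perm ι × Equiv.Perm ι} :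
    q ∈ Sol I S ↔ (∀ i, i ∉ S → q.1 i = i ∧ q.2 i = i) ∧ ∀ i ∈ S, I i (q.1 i) (q.2 i) := by
  simp [Sol]

lemma swap_cancel (F : Fin 3 → ι → Equiv.Perm ι × Equiv.Perm ι → ZMod 2)
    (α β γ : ι → ι → ZMod 2)
    (hF : ∀ t i q, F t i q = if t = 0 then α i (q.1 i) else if t = 1 then β (q.1 i) (q.2 i)
      else γ (q.2 i) i)
    (S : Finset ι) (i j : ι) (hi : i ∈ S) (hj : j ∈ S) (hij : i ≠ j) (p : ι → Fin 3)
    (hp : p i = p j) :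
    ∑ q ∈ univ.filter (fun q : Equiv.Perm ι × Equiv.Perm ι =>
      ∀ i, i ∉ S → q.1 i = i ∧ q.2 i = i), ∏ x ∈ S, F (p x) x q = 0 := by
  have hsw : ∀ x, x ∉ S → Equiv.swap i j x = x := by
    intro x hx
    apply Equiv.swap_apply_of_ne_of_ne <;> rintro rfl <;> contradiction
  have hne : Equiv.swap i j ≠ 1 := by
    intro h
    have := congrArg (fun e => e i) h
    simp at this
    exact hij this.symm
  have hne2 : ∀ π : Equiv.Perm ι, π * Equiv.swap i j ≠ π := by
    intro π h
    exact hne (by simpa using h)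
  have hz : ∀ a : ZMod 2, a + a = 0 := by decide
  have hsplit : ∀ q, ∏ x ∈ S, F (p x) x q =
      F (p i) i q * F (p j) j q * ∏ x ∈ (S.erase i).erase j, F (p x) x q := by
    intro q
    rw [← Finset.mul_prod_erase S _ hi, ← Finset.mul_prod_erase (S.erase i) _
      (Finset.mem_erase.2 ⟨hij.symm, hj⟩), mul_assoc]
  have hrest : ∀ x ∈ (S.erase i).erase j, Equiv.swap i j x = x := by
    intro x hx
    simp only [Finset.mem_erase] at hx
    exact Equiv.swap_apply_of_ne_of_ne hx.2.1 hx.1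
  have h3 : p i = 0 ∨ p i = 1 ∨ p i = 2 := by
    generalize p i = t
    revert t
    decide
  rcases h3 with h | h | h
  · refine Finset.sum_involution (fun q _ => (q.1, q.2 * Equiv.swap i j)) ?_ ?_ ?_ ?_
    · intro q hq
      have : ∏ x ∈ S, F (p x) x (q.1, q.2 * Equiv.swap i j) = ∏ x ∈ S, F (p x) x q := by
        rw [hsplit, hsplit]
        congr 1
        · simp [hF, ← hp, h]
        · refine Finset.prod_congr rfl fun x hx => ?_
          simp [hF, hrest x hx]
      rw [this, hz]
    · intro q hq _ h'
      exact hne2 _ (congrArg Prod.snd h')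
    · intro q hq
      simp only [mem_filter, mem_univ, true_and] at hq ⊢
      intro x hx
      simp [hsw x hx, hq x hx]
    · intro q hq
      simp [mul_assoc]
  · refine Finset.sum_involution (fun q _ => (q.1 * Equiv.swap i j, q.2 * Equiv.swap i j))
      ?_ ?_ ?_ ?_
    · intro q hq
      have : ∏ x ∈ S, F (p x) x (q.1 * Equiv.swap i j, q.2 * Equiv.swap i j)
          = ∏ x ∈ S, F (p x) x q := by
        rw [hsplit, hsplit]
        congr 1
        · simp [hF, ← hp, h, mul_comm]
        · refine Finset.prod_congr rfl fun x hx => ?_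
          simp [hF, hrest x hx]
      rw [this, hz]
    · intro q hq _ h'
      exact hne2 _ (congrArg Prod.snd h')
    · intro q hq
      simp only [mem_filter, mem_univ, true_and] at hq ⊢
      intro x hx
      simp [hsw x hx, hq x hx]
    · intro q hq
      simp [mul_assoc]
  · refine Finset.sum_involution (fun q _ => (q.1 * Equiv.swap i j, q.2)) ?_ ?_ ?_ ?_
    · intro q hq
      have : ∏ x ∈ S, F (p x) x (q.1 * Equiv.swap i j, q.2) = ∏ x ∈ S, F (p x) x q := by
        rw [hsplit, hsplit]
        congr 1
        · simp [hF, ← hp, h]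
        · refine Finset.prod_congr rfl fun x hx => ?_
          simp [hF, hrest x hx]
      rw [this, hz]
    · intro q hq _ h'
      exact hne2 _ (congrArg Prod.fst h')
    · intro q hq
      simp only [mem_filter, mem_univ, true_and] at hq ⊢
      intro x hx
      simp [hsw x hx, hq x hx]
    · intro q hq
      simp [mul_assoc]

lemma Sol_even {I : ι → ι → ι → Prop} (hI : ParityDec I) {S : Finset ι} (hS : 4 ≤ S.card) :
    ((Sol I S).card : ZMod 2) = 0 := by
  obtain ⟨α, β, γ, h⟩ := hI
  set F : Fin 3 → ι → Equiv.Perm ι × Equiv.Perm ι → ZMod 2 := fun t i q =>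
    if t = 0 then α i (q.1 i) else if t = 1 then β (q.1 i) (q.2 i) else γ (q.2 i) i with hFd
  have h1 : ((Sol I S).card : ZMod 2) = ∑ q ∈ univ.filter (fun q : Equiv.Perm ι × Equiv.Perm ι =>
      ∀ i, i ∉ S → q.1 i = i ∧ q.2 i = i), ∏ x ∈ S, ∑ t : Fin 3, F t x q := by
    have : Sol I S = (univ.filter (fun q : Equiv.Perm ι × Equiv.Perm ι =>
      ∀ i, i ∉ S → q.1 i = i ∧ q.2 i = i)).filter
        (fun q => ∀ i ∈ S, I i (q.1 i) (q.2 i)) := by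
      ext q; simp [Sol]
    rw [this, Finset.card_filter, Nat.cast_sum]
    refine Finset.sum_congr rfl fun q _ => ?_
    have : ∀ x ∈ S, ∑ t : Fin 3, F t x q = if I x (q.1 x) (q.2 x) then 1 else 0 := by
      intro x _
      rw [h, Fin.sum_univ_three]
      simp [hFd]
    rw [Finset.prod_congr rfl this]
    by_cases hq : ∀ i ∈ S, I i (q.1 i) (q.2 i)
    · rw [if_pos hq, Finset.prod_congr rfl fun x hx => if_pos (hq x hx)]
      simp
    · rw [if_neg hq]
      push Not at hq
      obtain ⟨i, hi, hi'⟩ := hq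
      rw [Finset.prod_eq_zero hi (if_neg hi')]
      simp
  rw [h1]
  have h2 : ∀ q, ∏ x ∈ S, ∑ t : Fin 3, F t x q =
      ∑ p ∈ S.pi (fun _ => (univ : Finset (Fin 3))), ∏ x ∈ S,
        F (if hx : x ∈ S then p x hx else 0) x q := by
    intro q
    rw [Finset.prod_sum]
    refine Finset.sum_congr rfl fun p _ => ?_
    rw [← Finset.prod_attach S]
    refine Finset.prod_congr rfl fun x _ => ?_
    simp
  simp_rw [h2]
  rw [Finset.sum_comm]
  refine Finset.sum_eq_zero fun p _ => ?_
  set p' : ι → Fin 3 := fun x => if hx : x ∈ S then p x hx else 0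
  obtain ⟨i, hi, j, hj, hij, hp⟩ := Finset.exists_ne_map_eq_of_card_lt_of_maps_to
    (s := S) (t := (univ : Finset (Fin 3))) (f := p') (by simp; omega) (by intro x _; simp)
  exact swap_cancel F α β γ (by intro t i q; rfl) S i j hi hj hij p' hp

/-- Two members of a rich family on at least seven vertices meet in a single vertex. -/
lemma exists_single_meet (H : Finset ι → Prop) (S : Finset ι) (hS : 7 ≤ S.card)
    (h4 : ∀ T ⊆ S, T.card = 4 → ∃ E ⊆ T, H E) (h2 : ∀ E, H E → 2 ≤ E.card) :
    ∃ E F a, H E ∧ H F ∧ a ∈ E ∧ a ∈ F ∧ ∀ b, b ∈ E → b ∈ F → b = a := by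
  by_contra hcon
  have hN : ∀ E F a, H E → H F → a ∈ E → a ∈ F → ∃ b, b ∈ E ∧ b ∈ F ∧ b ≠ a := by
    intro E F a hE hF ha hb
    by_contra h
    push Not at h
    exact hcon ⟨E, F, a, hE, hF, ha, hb, h⟩
  have key : ∀ E ⊆ S, H E → ∀ T ⊆ S \ E, T.card = 3 → ∃ F ⊆ T, H F := by
    intro E hES hE T hT hT3
    obtain ⟨v, hv⟩ : E.Nonempty := Finset.card_pos.1 (by have := h2 E hE; omega)
    have hvT : v ∉ T := fun h => (Finset.mem_sdiff.1 (hT h)).2 hv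
    obtain ⟨F, hF, hHF⟩ := h4 (insert v T)
      (Finset.insert_subset (hES hv) (hT.trans Finset.sdiff_subset))
      (by rw [Finset.card_insert_of_notMem hvT, hT3])
    refine ⟨F, ?_, hHF⟩
    intro x hx
    rcases Finset.mem_insert.1 (hF hx) with rfl | h
    · obtain ⟨b, hb1, hb2, hb3⟩ := hN E F x hE hHF hv hx
      rcases Finset.mem_insert.1 (hF hb2) with rfl | h
      · exact absurd rfl hb3
      · exact absurd hb1 (Finset.mem_sdiff.1 (hT h)).2
    · exact h
  by_cases h : ∃ F ⊆ S, H F ∧ F.card = 2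
  · obtain ⟨F, hFS, hF, hF2⟩ := h
    have hR : 5 ≤ (S \ F).card := by
      have := Finset.card_sdiff_add_card_eq_card hFS
      omega
    have k3 := key F hFS hF
    have no2 : ∀ G ⊆ S \ F, H G → G.card = 2 → False := by
      intro G hG hHG hG2
      obtain ⟨p, q, hpq, rfl⟩ := Finset.card_eq_two.1 hG2
      have : 3 ≤ ((S \ F) \ {p, q}).card := by
        have := Finset.card_sdiff_add_card_eq_card hG
        omega
      obtain ⟨U, hU, hU3⟩ := Finset.exists_subset_card_eq this
      obtain ⟨s, t, z, hst, hsz, htz, rfl⟩ := Finset.card_eq_three.1 hU3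
      have hs := hU (show s ∈ ({s, t, z} : Finset ι) by simp)
      have ht := hU (show t ∈ ({s, t, z} : Finset ι) by simp)
      have hz := hU (show z ∈ ({s, t, z} : Finset ι) by simp)
      have hp := hG (show p ∈ ({p, q} : Finset ι) by simp)
      simp only [Finset.mem_sdiff, Finset.mem_insert, Finset.mem_singleton, not_or] at hs ht hz hp
      have aux : ∀ s t, s ∈ S \ F → t ∈ S \ F → s ≠ t → s ≠ p → s ≠ q → t ≠ p → t ≠ q →
          H {s, t} := by
        intro s t hs ht hst hsp hsq htp htq
        obtain ⟨K, hK, hHK⟩ := k3 {p, s, t} (by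
          intro x hx
          simp only [Finset.mem_insert, Finset.mem_singleton] at hx
          rcases hx with rfl | rfl | rfl
          · exact Finset.mem_sdiff.2 hp
          · exact hs
          · exact ht) (by
          rw [Finset.card_eq_three]; exact ⟨p, s, t, hsp.symm, htp.symm, hst, rfl⟩)
        have hpK : p ∉ K := by
          intro h
          obtain ⟨b, hb1, hb2, hb3⟩ := hN {p, q} K p hHG hHK (by simp) h
          have := hK hb2
          simp only [Finset.mem_insert, Finset.mem_singleton] at this hb1
          grind
        have hK' : K ⊆ {s, t} := by
          intro x hx
          have := hK hx
          simp only [Finset.mem_insert, Finset.mem_singleton] at this ⊢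
          grind
        have : K = {s, t} := Finset.eq_of_subset_of_card_le hK' (by
          rw [Finset.card_pair hst]; exact h2 K hHK)
        exact this ▸ hHK
      have h1 := aux s t (Finset.mem_sdiff.2 hs.1) (Finset.mem_sdiff.2 ht.1) hst hs.2.1 hs.2.2
        ht.2.1 ht.2.2
      have h1' := aux s z (Finset.mem_sdiff.2 hs.1) (Finset.mem_sdiff.2 hz.1) hsz hs.2.1 hs.2.2
        hz.2.1 hz.2.2
      obtain ⟨b, hb1, hb2, hb3⟩ := hN _ _ s h1 h1' (by simp) (by simp)
      simp only [Finset.mem_insert, Finset.mem_singleton] at hb1 hb2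
      grind
    obtain ⟨U, hU, hU5⟩ := Finset.exists_subset_card_eq (show 3 ≤ (S \ F).card by omega)
    obtain ⟨G, hG, hHG⟩ := k3 U hU hU5
    have hG3 : G.card = 3 := by
      have h1 := Finset.card_le_card hG
      have h3 := h2 G hHG
      have h4 : G.card ≠ 2 := fun h => no2 G (hG.trans hU) hHG h
      omega
    have hGR := hG.trans hU
    have : 2 ≤ ((S \ F) \ G).card := by
      have := Finset.card_sdiff_add_card_eq_card hGR
      omega
    obtain ⟨V, hV, hV2⟩ := Finset.exists_subset_card_eq this
    obtain ⟨t, z, htz, rfl⟩ := Finset.card_eq_two.1 hV2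
    obtain ⟨s, hs⟩ : G.Nonempty := Finset.card_pos.1 (by omega)
    have ht := Finset.mem_sdiff.1 (hV (show t ∈ ({t, z} : Finset ι) by simp))
    have hz := Finset.mem_sdiff.1 (hV (show z ∈ ({t, z} : Finset ι) by simp))
    obtain ⟨K, hK, hHK⟩ := k3 {s, t, z} (by
          intro x hx
          simp only [Finset.mem_insert, Finset.mem_singleton] at hx
          rcases hx with rfl | rfl | rfl
          · exact hGR hs
          · exact ht.1
          · exact hz.1) (by
          rw [Finset.card_eq_three]
          refine ⟨s, t, z, ?_, ?_, htz, rfl⟩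
          · rintro rfl; exact ht.2 hs
          · rintro rfl; exact hz.2 hs)
    have hsK : s ∉ K := by
      intro h
      obtain ⟨b, hb1, hb2, hb3⟩ := hN G K s hHG hHK hs h
      have := hK hb2
      simp only [Finset.mem_insert, Finset.mem_singleton] at this
      rcases this with rfl | rfl | rfl
      · exact hb3 rfl
      · exact ht.2 hb1
      · exact hz.2 hb1
    have hK' : K ⊆ {t, z} := by
      intro x hx
      have := hK hx
      simp only [Finset.mem_insert, Finset.mem_singleton] at this ⊢
      grind
    have hKc : K.card = 2 := by
      have h1 := Finset.card_le_card hK'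
      rw [Finset.card_pair htz] at h1
      have h3 := h2 K hHK
      omega
    exact no2 K (hK'.trans (hV.trans Finset.sdiff_subset)) hHK hKc
  · push Not at h
    have h3 : ∀ F ⊆ S, H F → 3 ≤ F.card := by
      intro F hF hHF
      have h1 := h F hF hHF
      have := h2 F hHF
      omega
    obtain ⟨T, hT, hT4⟩ := Finset.exists_subset_card_eq (show 4 ≤ S.card by omega)
    obtain ⟨E, hE, hHE⟩ := h4 T hT hT4
    have hES := hE.trans hT
    have : 3 ≤ (S \ E).card := by
      have := Finset.card_sdiff_add_card_eq_card hES
      have := Finset.card_le_card hE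
      omega
    obtain ⟨U, hU, hU3⟩ := Finset.exists_subset_card_eq this
    obtain ⟨F, hF, hHF⟩ := key E hES hHE U hU hU3
    have hFS : F ⊆ S := (hF.trans hU).trans Finset.sdiff_subset
    have hF3 : F.card = 3 := le_antisymm (hU3 ▸ Finset.card_le_card hF) (h3 F hFS hHF)
    have all3 : ∀ T ⊆ S \ F, T.card = 3 → H T := by
      intro T hT hT3
      obtain ⟨K, hK, hHK⟩ := key F hFS hHF T hT hT3
      have := Finset.eq_of_subset_of_card_le hK (by
        rw [hT3]; exact h3 K ((hK.trans hT).trans Finset.sdiff_subset) hHK)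
      exact this ▸ hHK
    have : 4 ≤ (S \ F).card := by
      have := Finset.card_sdiff_add_card_eq_card hFS
      omega
    obtain ⟨W, hW, hW4⟩ := Finset.exists_subset_card_eq this
    obtain ⟨p, q, s, t, hpq, hps, hpt, hqs, hqt, hst, rfl⟩ := Finset.card_eq_four.1 hW4
    obtain ⟨u, v, w, huv, huw, hvw, rfl⟩ := Finset.card_eq_three.1 hF3
    have hp := Finset.mem_sdiff.1 (hW (show p ∈ ({p, q, s, t} : Finset ι) by simp))
    have hq := Finset.mem_sdiff.1 (hW (show q ∈ ({p, q, s, t} : Finset ι) by simp))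
    have hs := Finset.mem_sdiff.1 (hW (show s ∈ ({p, q, s, t} : Finset ι) by simp))
    have ht := Finset.mem_sdiff.1 (hW (show t ∈ ({p, q, s, t} : Finset ι) by simp))
    have m1 : H {p, s, t} := all3 _ (by
      intro x hx
      apply hW
      simp only [Finset.mem_insert, Finset.mem_singleton] at hx ⊢
      tauto) (Finset.card_eq_three.2 ⟨p, s, t, hps, hpt, hst, rfl⟩)
    have m2 : H {q, s, t} := all3 _ (by
      intro x hx
      apply hW
      simp only [Finset.mem_insert, Finset.mem_singleton] at hx ⊢
      tauto) (Finset.card_eq_three.2 ⟨q, s, t, hqs, hqt, hst, rfl⟩)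
    simp only [Finset.mem_insert, Finset.mem_singleton, not_or] at hp hq hs ht
    have hu : u ∈ S := hFS (by simp)
    have hv : v ∈ S := hFS (by simp)
    have hsub : ({u, v, p, q} : Finset ι) ⊆ S := by
      intro x hx
      simp only [Finset.mem_insert, Finset.mem_singleton] at hx
      rcases hx with rfl | rfl | rfl | rfl
      exacts [hu, hv, hp.1, hq.1]
    obtain ⟨K, hK, hHK⟩ := h4 {u, v, p, q} hsub (Finset.card_eq_four.2
      ⟨u, v, p, q, huv, Ne.symm hp.2.1, Ne.symm hq.2.1, Ne.symm hp.2.2.1, Ne.symm hq.2.2.1,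
        hpq, rfl⟩)
    have hpK : p ∉ K := by
      intro h
      obtain ⟨b, hb1, hb2, hb3⟩ := hN _ K p m1 hHK (by simp) h
      have := hK hb2
      simp only [Finset.mem_insert, Finset.mem_singleton] at this hb1
      grind
    have hqK : q ∉ K := by
      intro h
      obtain ⟨b, hb1, hb2, hb3⟩ := hN _ K q m2 hHK (by simp) h
      have := hK hb2
      simp only [Finset.mem_insert, Finset.mem_singleton] at this hb1
      grind
    have hK' : K ⊆ {u, v} := by
      intro x hx
      have := hK hx
      simp only [Finset.mem_insert, Finset.mem_singleton] at this ⊢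
      grind
    have h1 := Finset.card_le_card hK'
    rw [Finset.card_pair huv] at h1
    have := h3 K (hK.trans hsub) hHK
    omega

/-- The support of a pair of permutations. -/
noncomputable def psupp (q : Equiv.Perm ι × Equiv.Perm ι) : Finset ι :=
  univ.filter fun i => ¬ (q.1 i = i ∧ q.2 i = i)

lemma mem_psupp {q : Equiv.Perm ι × Equiv.Perm ι} {i : ι} :
    i ∈ psupp q ↔ ¬ (q.1 i = i ∧ q.2 i = i) := by simp [psupp]

lemma fst_mem_psupp {q : Equiv.Perm ι × Equiv.Perm ι} {i : ι} (h : q.1 i ≠ i) :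
    q.1 i ∈ psupp q := by
  rw [mem_psupp]
  intro h'
  exact h (q.1.injective h'.1)

lemma snd_mem_psupp {q : Equiv.Perm ι × Equiv.Perm ι} {i : ι} (h : q.2 i ≠ i) :
    q.2 i ∈ psupp q := by
  rw [mem_psupp]
  intro h'
  exact h (q.2.injective h'.2)

lemma two_le_psupp {q : Equiv.Perm ι × Equiv.Perm ι} (h : q ≠ 1) : 2 ≤ (psupp q).card := by
  have : ∃ i, i ∈ psupp q := by
    by_contra hc
    push Not at hc
    apply h
    have h' : ∀ i, q.1 i = i ∧ q.2 i = i := fun i => by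
      have := hc i
      rw [mem_psupp] at this
      exact not_not.1 this
    ext i
    · simp [(h' i).1]
    · simp [(h' i).2]
  obtain ⟨i, hi⟩ := this
  have : ∃ j, j ∈ psupp q ∧ i ≠ j := by
    have h1 := mem_psupp.1 hi
    by_cases h2 : q.1 i = i
    · have h3 : q.2 i ≠ i := fun h3 => h1 ⟨h2, h3⟩
      exact ⟨_, snd_mem_psupp h3, h3.symm⟩
    · exact ⟨_, fst_mem_psupp h2, Ne.symm h2⟩
  obtain ⟨j, hj, hij⟩ := this
  exact Finset.one_lt_card.2 ⟨i, hi, j, hj, hij⟩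

lemma Sol_mono {I : ι → ι → ι → Prop} {S T : Finset ι} (hT : T ⊆ S) (h : ∀ i ∈ S, I i i i) :
    Sol I T ⊆ Sol I S := by
  intro q hq
  rw [mem_Sol] at hq ⊢
  refine ⟨fun i hi => hq.1 i (fun h => hi (hT h)), fun i hi => ?_⟩
  by_cases hiT : i ∈ T
  · exact hq.2 i hiT
  · rw [(hq.1 i hiT).1, (hq.1 i hiT).2]; exact h i hi

lemma one_mem_Sol {I : ι → ι → ι → Prop} {S : Finset ι} (h : ∀ i ∈ S, I i i i) :
    (1 : Equiv.Perm ι × Equiv.Perm ι) ∈ Sol I S := by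
  rw [mem_Sol]
  simpa using h

lemma exists_ne_one {I : ι → ι → ι → Prop} (hI : ParityDec I) {S : Finset ι}
    (h : ∀ i ∈ S, I i i i) (hS : 4 ≤ S.card) : ∃ q ∈ Sol I S, q ≠ 1 := by
  by_contra hc
  push Not at hc
  have : Sol I S = {1} := Finset.eq_singleton_iff_unique_mem.2 ⟨one_mem_Sol h, hc⟩
  have h2 := Sol_even hI hS
  rw [this] at h2
  simp at h2

lemma Sol_step {I : ι → ι → ι → Prop} {S : Finset ι} {a : ι} (ha : a ∈ S)
    (Q : Finset (Equiv.Perm ι × Equiv.Perm ι)) (hQ : Q ⊆ Sol I S)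
    (hinj : ∀ q ∈ Q, ∀ q' ∈ Q, q.1 a = q'.1 a → q.2 a = q'.2 a → q = q') (b : ℕ)
    (hb : ∀ q ∈ Q, b ≤ (Sol (fun i j l => I i (q.1 j) (q.2 l)) (S.erase a)).card) :
    Q.card * b ≤ (Sol I S).card := by
  have h1 : Q.biUnion (fun q => (Sol (fun i j l => I i (q.1 j) (q.2 l)) (S.erase a)).image
      (fun x => q * x)) ⊆ Sol I S := by
    intro z hz
    simp only [Finset.mem_biUnion, Finset.mem_image] at hz
    obtain ⟨q, hq, x, hx, rfl⟩ := hz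
    have hq' := mem_Sol.1 (hQ hq)
    rw [mem_Sol] at hx ⊢
    refine ⟨fun i hi => ?_, fun i hi => ?_⟩
    · have := hx.1 i (fun h => hi (Finset.mem_of_mem_erase h))
      simp [this.1, this.2, hq'.1 i hi]
    · by_cases hia : i = a
      · subst hia
        have := hx.1 i (by simp)
        simpa [this.1, this.2] using hq'.2 i hi
      · simpa using hx.2 i (Finset.mem_erase.2 ⟨hia, hi⟩)
  refine le_trans ?_ (Finset.card_le_card h1)
  rw [Finset.card_biUnion]
  · rw [← smul_eq_mul]
    refine Finset.card_nsmul_le_sum _ _ _ fun q hq => ?_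
    rw [Finset.card_image_of_injective _ (mul_right_injective q)]
    exact hb q hq
  · intro q hq q' hq' hne
    rw [Function.onFun, Finset.disjoint_left]
    intro z hz hz'
    simp only [Finset.mem_image] at hz hz'
    obtain ⟨x, hx, rfl⟩ := hz
    obtain ⟨x', hx', he⟩ := hz'
    apply hne
    have hx1 := (mem_Sol.1 hx).1 a (by simp)
    have hx2 := (mem_Sol.1 hx').1 a (by simp)
    have e1 := congrArg (fun z : Equiv.Perm ι × Equiv.Perm ι => z.1 a) he
    have e2 := congrArg (fun z : Equiv.Perm ι × Equiv.Perm ι => z.2 a) he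
    simp [hx1, hx2] at e1 e2
    exact hinj q hq q' hq' e1.symm e2.symm

/-- The recursive lower bound. -/
def bd (n : ℕ) : ℕ := if n ≤ 3 then 1 else if n ≤ 6 then 2 ^ (n - 3) else 8 * 3 ^ (n - 6)

lemma bd_small {n : ℕ} (h3 : 4 ≤ n) (h6 : n ≤ 6) : bd n = 2 * bd (n - 1) := by
  interval_cases n <;> rfl

lemma bd_large {n : ℕ} (h6 : 7 ≤ n) : bd n = 3 * bd (n - 1) := by
  obtain ⟨m, rfl⟩ := Nat.exists_eq_add_of_le h6
  rcases Nat.eq_zero_or_pos m with rfl | hm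
  · rfl
  · unfold bd
    rw [if_neg (by omega), if_neg (by omega), if_neg (by omega), if_neg (by omega),
      show 7 + m - 6 = (7 + m - 1 - 6) + 1 by omega, pow_succ]
    ring

theorem bd_le_Sol (n : ℕ) : ∀ (I : ι → ι → ι → Prop) (_ : ParityDec I) (S : Finset ι)
    (_ : S.card = n) (_ : ∀ i ∈ S, I i i i), bd n ≤ (Sol I S).card := by
  induction n using Nat.strong_induction_on with
  | _ n ih =>
  intro I hI S hSn h
  have hdec : ∀ q : Equiv.Perm ι × Equiv.Perm ι,
      ParityDec (fun i j l => I i (q.1 j) (q.2 l)) := by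
    obtain ⟨α, β, γ, h⟩ := hI
    intro q
    exact ⟨fun i j => α i (q.1 j), fun j l => β (q.1 j) (q.2 l), fun l i => γ (q.2 l) i,
      fun i j l => by convert h i (q.1 j) (q.2 l)⟩
  have hstep : ∀ (a : ι) (_ : a ∈ S) (Q : Finset (Equiv.Perm ι × Equiv.Perm ι))
      (_ : Q ⊆ Sol I S)
      (_ : ∀ q ∈ Q, ∀ q' ∈ Q, q.1 a = q'.1 a → q.2 a = q'.2 a → q = q'),
      Q.card * bd (n - 1) ≤ (Sol I S).card := by
    intro a ha Q hQ hinj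
    have hn : 0 < n := hSn ▸ Finset.card_pos.2 ⟨a, ha⟩
    refine Sol_step ha Q hQ hinj _ fun q hq => ?_
    refine ih (n - 1) (by omega) _ (hdec q) _ ?_ ?_
    · rw [Finset.card_erase_of_mem ha, hSn]
    · intro i hi
      exact (mem_Sol.1 (hQ hq)).2 i (Finset.mem_of_mem_erase hi)
  rcases Nat.lt_or_ge n 4 with hn | hn
  · have : bd n = 1 := by simp [bd, show n ≤ 3 by omega]
    rw [this]
    exact Finset.card_pos.2 ⟨1, one_mem_Sol h⟩
  rcases Nat.lt_or_ge n 7 with hn7 | hn7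
  · rw [bd_small hn (by omega)]
    obtain ⟨q, hq, hq1⟩ := exists_ne_one hI h (by omega)
    obtain ⟨a, ha⟩ : (psupp q).Nonempty := Finset.card_pos.1 (by have := two_le_psupp hq1; omega)
    have hne := mem_psupp.1 ha
    have haS : a ∈ S := by
      by_contra hc
      exact hne ((mem_Sol.1 hq).1 a hc)
    have := hstep a haS {1, q} (by
      intro x hx
      simp only [Finset.mem_insert, Finset.mem_singleton] at hx
      rcases hx with rfl | rfl
      exacts [one_mem_Sol h, hq]) (by
      intro x hx y hy e1 e2
      simp only [Finset.mem_insert, Finset.mem_singleton] at hx hy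
      rcases hx with rfl | rfl <;> rcases hy with rfl | rfl
      · rfl
      · exact absurd ⟨e1.symm, e2.symm⟩ hne
      · exact absurd ⟨e1, e2⟩ hne
      · rfl)
    rwa [Finset.card_pair hq1.symm] at this
  · rw [bd_large hn7]
    obtain ⟨E, F, a, ⟨q, hq, hq1, rfl⟩, ⟨q', hq', hq1', rfl⟩, haE, haF, huniq⟩ :=
      exists_single_meet (fun E => ∃ q ∈ Sol I S, q ≠ 1 ∧ psupp q = E) S (by omega) (by
        intro T hT hT4
        obtain ⟨q, hq, hq1⟩ := exists_ne_one hI (fun i hi => h i (hT hi)) hT4.ge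
        refine ⟨psupp q, ?_, q, Sol_mono hT h hq, hq1, rfl⟩
        intro i hi
        by_contra hc
        exact mem_psupp.1 hi ((mem_Sol.1 hq).1 i hc)) (by
        rintro E ⟨q, hq, hq1, rfl⟩
        exact two_le_psupp hq1)
    have hne := mem_psupp.1 haE
    have hne' := mem_psupp.1 haF
    have haS : a ∈ S := by
      by_contra hc
      exact hne ((mem_Sol.1 hq).1 a hc)
    have hdiff : ¬ (q.1 a = q'.1 a ∧ q.2 a = q'.2 a) := by
      rintro ⟨e1, e2⟩
      by_cases h1 : q.1 a = a
      · have h2 : q.2 a ≠ a := fun h2 => hne ⟨h1, h2⟩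
        exact h2 (huniq _ (snd_mem_psupp h2) (by
          rw [e2]; exact snd_mem_psupp (by rwa [← e2])))
      · exact h1 (huniq _ (fst_mem_psupp h1) (by
          rw [e1]; exact fst_mem_psupp (by rwa [← e1])))
    have hqq : q ≠ q' := by
      rintro rfl
      exact hdiff ⟨rfl, rfl⟩
    have := hstep a haS {1, q, q'} (by
      intro x hx
      simp only [Finset.mem_insert, Finset.mem_singleton] at hx
      rcases hx with rfl | rfl | rfl
      exacts [one_mem_Sol h, hq, hq']) (by
      intro x hx y hy e1 e2
      simp only [Finset.mem_insert, Finset.mem_singleton] at hx hy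
      rcases hx with rfl | rfl | rfl <;> rcases hy with rfl | rfl | rfl
      · rfl
      · exact absurd ⟨e1.symm, e2.symm⟩ hne
      · exact absurd ⟨e1.symm, e2.symm⟩ hne'
      · exact absurd ⟨e1, e2⟩ hne
      · rfl
      · exact absurd ⟨e1, e2⟩ hdiff
      · exact absurd ⟨e1, e2⟩ hne'
      · exact absurd ⟨e1.symm, e2.symm⟩ hdiff
      · rfl)
    rwa [Finset.card_eq_three.2 ⟨1, q, q', hq1.symm, hq1'.symm, hqq, rfl⟩] at this

end Birch


section Degree

variable {ι : Type*} [Fintype ι] [DecidableEq ι]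

/-- Index `i` is the last coordinate at which the ray `a + t b` becomes positive. -/
def Enter (a b : ι → ℝ) (i : ι) : Prop :=
  a i < 0 ∧ 0 < b i ∧ ∀ j, j ≠ i → 0 < a j * b i - a i * b j

lemma enter_unique (a b : ι → ℝ) (i i' : ι) (h : Enter a b i) (h' : Enter a b i') : i = i' := by
  by_contra hne
  have h1 := h.2.2 i' (fun e => hne e.symm)
  have h2 := h'.2.2 i hne
  linarith

lemma enter_pos (a b : ι → ℝ) (i : ι) (h : Enter a b i) : ∃ t > 0, ∀ j, 0 < a j + t * b j := by
  obtain ⟨h1, h2, h3⟩ := h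
  have hj : ∀ j, ∃ ε > 0, ∀ δ, 0 < δ → δ < ε → 0 < a j + (- a i / b i + δ) * b j := by
    intro j
    by_cases hji : j = i
    · subst hji
      refine ⟨1, one_pos, fun δ hδ _ => ?_⟩
      have : a j + (- a j / b j + δ) * b j = δ * b j := by field_simp; ring
      rw [this]; positivity
    · have h4 := h3 j hji
      have h5 : 0 < a j + (- a i / b i) * b j := by
        have : a j + (- a i / b i) * b j = (a j * b i - a i * b j) / b i := by field_simp; ring
        rw [this]; positivity
      refine ⟨(a j + (- a i / b i) * b j) / (|b j| + 1), by positivity, fun δ hδ hlt => ?_⟩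
      rw [lt_div_iff₀ (by positivity)] at hlt
      have : - (δ * b j) ≤ δ * |b j| := by
        have := neg_abs_le (b j)
        nlinarith
      nlinarith
  choose ε hε hε' using hj
  obtain ⟨δ, hδ, hlt⟩ : ∃ δ > 0, ∀ j, δ < ε j := by
    have hne : (Finset.univ : Finset ι).Nonempty := ⟨i, Finset.mem_univ _⟩
    refine ⟨(Finset.univ.inf' hne ε) / 2, ?_, fun j => ?_⟩
    · have : 0 < Finset.univ.inf' hne ε := by
        rw [Finset.lt_inf'_iff]; intro j _; exact hε j
      linarith
    · have h6 : Finset.univ.inf' hne ε ≤ ε j := Finset.inf'_le _ (Finset.mem_univ j)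
      have := hε j
      linarith
  refine ⟨- a i / b i + δ, ?_, fun j => hε' j δ hδ (hlt j)⟩
  have : 0 < - a i / b i := div_pos (by linarith) h2
  linarith

lemma exists_enter (a b : ι → ℝ) (ha : ∀ i, a i ≠ 0)
    (hab : ∀ i j, i ≠ j → a i * b j ≠ a j * b i)
    (hP : ∃ t > 0, ∀ j, 0 < a j + t * b j) (hna : ¬ ∀ i, 0 < a i) : ∃ i, Enter a b i := by
  obtain ⟨t, ht, htp⟩ := hP
  push Not at hna
  obtain ⟨i0, hi0⟩ := hna
  have hi0' : a i0 < 0 := lt_of_le_of_ne hi0 (ha i0)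
  obtain ⟨i, hi, hmax⟩ := Finset.exists_max_image (Finset.univ.filter fun i => a i < 0)
    (fun i => - a i / b i) ⟨i0, by simp [hi0']⟩
  simp only [Finset.mem_filter, Finset.mem_univ, true_and] at hi hmax
  have hb : ∀ j, a j < 0 → 0 < b j := by
    intro j hj
    have := htp j
    by_contra hcon
    push Not at hcon
    nlinarith
  have hbi := hb i hi
  refine ⟨i, hi, hbi, fun j hj => ?_⟩
  rcases lt_or_gt_of_ne (ha j) with hneg | hpos
  · have h1 := hmax j hneg
    have hbj := hb j hneg
    rw [div_le_div_iff₀ hbj hbi] at h1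
    have h2 := hab j i hj
    have : a j * b i ≠ a i * b j := h2
    rcases lt_or_gt_of_ne this with h3 | h3 <;> linarith
  · by_cases hbj : 0 ≤ b j
    · have : 0 < a j * b i := mul_pos hpos hbi
      nlinarith
    · push Not at hbj
      have h1 := htp i
      have h2 := htp j
      have h3 : 0 < (a j + t * b j) * b i := mul_pos h2 hbi
      have h4 : 0 < (a i + t * b i) * (- b j) := mul_pos h1 (by linarith)
      nlinarith

lemma pos_ray (a b : ι → ℝ) (ha : ∀ i, 0 < a i) : ∃ t > 0, ∀ j, 0 < a j + t * b j := by
  rcases isEmpty_or_nonempty ι with h | h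
  · exact ⟨1, one_pos, fun j => (h.false j).elim⟩
  · have hne : (Finset.univ : Finset ι).Nonempty := Finset.univ_nonempty
    set m := Finset.univ.inf' hne (fun j => a j / (|b j| + 1)) with hm
    have hmp : 0 < m := by
      rw [hm, Finset.lt_inf'_iff]; intro j _; have := ha j; positivity
    refine ⟨m / 2, by positivity, fun j => ?_⟩
    have h6 : m ≤ a j / (|b j| + 1) := Finset.inf'_le _ (Finset.mem_univ j)
    rw [le_div_iff₀ (by positivity)] at h6
    have := neg_abs_le (b j)
    have := abs_nonneg (b j)
    nlinarith

lemma ray_count (a b : ι → ℝ) (ha : ∀ i, a i ≠ 0)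
    (hab : ∀ i j, i ≠ j → a i * b j ≠ a j * b i) :
    (if ∀ i, 0 < a i then (1 : ℤ) else 0) + ∑ i, (if Enter a b i then 1 else 0) =
      if ∃ t > 0, ∀ j, 0 < a j + t * b j then 1 else 0 := by
  by_cases hpos : ∀ i, 0 < a i
  · have : ∀ i, ¬ Enter a b i := fun i h => absurd h.1 (not_lt.2 (hpos i).le)
    simp only [this, if_false, Finset.sum_const_zero, add_zero]
    rw [if_pos hpos, if_pos (pos_ray a b hpos)]
  · by_cases hP : ∃ t > 0, ∀ j, 0 < a j + t * b j
    · obtain ⟨i, hi⟩ := exists_enter a b ha hab hP hpos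
      rw [if_neg hpos, if_pos hP, Finset.sum_eq_single i]
      · simp [hi]
      · intro j _ hj
        rw [if_neg]
        exact fun h => hj (enter_unique a b j i h hi)
      · simp
    · have : ∀ i, ¬ Enter a b i := fun i h => hP (enter_pos a b i h)
      simp only [this, if_false, Finset.sum_const_zero, add_zero]
      rw [if_neg hpos, if_neg hP]

lemma ray_symm (a b : ι → ℝ) (ha : ∀ i, a i ≠ 0) (hb : ∀ i, b i ≠ 0)
    (hab : ∀ i j, i ≠ j → a i * b j ≠ a j * b i) :
    (if ∀ i, 0 < a i then (1 : ℤ) else 0) - (if ∀ i, 0 < b i then (1 : ℤ) else 0) =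
      ∑ i, ((if Enter b a i then 1 else 0) - (if Enter a b i then 1 else 0)) := by
  have h1 := ray_count a b ha hab
  have h2 := ray_count b a hb (fun i j hij => by
    intro h; apply hab j i hij.symm; linarith)
  have h3 : (∃ t > 0, ∀ j, 0 < a j + t * b j) ↔ (∃ t > 0, ∀ j, 0 < b j + t * a j) := by
    have key : ∀ a b : ι → ℝ, (∃ t > 0, ∀ j, 0 < a j + t * b j) →
        (∃ t > 0, ∀ j, 0 < b j + t * a j) := by
      rintro a b ⟨t, ht, h⟩
      refine ⟨t⁻¹, by positivity, fun j => ?_⟩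
      have := h j
      have h4 : b j + t⁻¹ * a j = t⁻¹ * (a j + t * b j) := by field_simp; ring
      rw [h4]; positivity
    exact ⟨key a b, key b a⟩
  rw [Finset.sum_sub_distrib]
  simp only [h3] at h1
  linarith

/-- The signed indicator that `-u` is a strictly positive combination of the rows of `v`. -/
noncomputable def sgc (v : Matrix ι ι ℝ) (u : ι → ℝ) : ℤ :=
  if ∃ a : ι → ℝ, (∀ i, 0 < a i) ∧ Matrix.vecMul a v + u = 0 then
    ((SignType.sign v.det : SignType) : ℤ) else 0

lemma vecMul_inj {v : Matrix ι ι ℝ} (hv : v.det ≠ 0) {a b : ι → ℝ}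
    (h : Matrix.vecMul a v = Matrix.vecMul b v) : a = b := by
  have hu : IsUnit v := (Matrix.isUnit_iff_isUnit_det v).2 hv.isUnit
  exact (Matrix.vecMul_injective_iff_isUnit.2 hu) h

lemma exists_coef {v : Matrix ι ι ℝ} (hv : v.det ≠ 0) (y : ι → ℝ) :
    ∃ a, Matrix.vecMul a v = y := by
  refine ⟨Matrix.vecMul y v⁻¹, ?_⟩
  rw [Matrix.vecMul_vecMul, Matrix.nonsing_inv_mul _ hv.isUnit, Matrix.vecMul_one]

lemma vecMul_updateRow (v : Matrix ι ι ℝ) (i : ι) (u x : ι → ℝ) :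
    Matrix.vecMul x (v.updateRow i u) = Matrix.vecMul (Function.update x i 0) v + x i • u := by
  ext k
  simp only [Matrix.vecMul, dotProduct, Pi.add_apply, Pi.smul_apply, smul_eq_mul]
  rw [← Finset.add_sum_erase _ _ (Finset.mem_univ i),
    ← Finset.add_sum_erase Finset.univ (fun j => Function.update x i 0 j * v j k)
      (Finset.mem_univ i)]
  simp only [Matrix.updateRow_self, Function.update_self, zero_mul, zero_add]
  rw [add_comm]
  congr 1
  apply Finset.sum_congr rfl
  intro j hj
  have hj' : j ≠ i := Finset.ne_of_mem_erase hj
  rw [Matrix.updateRow_ne hj', Function.update_of_ne hj']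

lemma det_updateRow_vecMul (v : Matrix ι ι ℝ) (i : ι) (a : ι → ℝ) :
    (v.updateRow i (Matrix.vecMul a v)).det = a i * v.det := by
  have : v.updateRow i (Matrix.vecMul a v) = (1 : Matrix ι ι ℝ).updateRow i a * v := by
    ext j k
    by_cases hj : j = i
    · subst hj
      simp [Matrix.mul_apply, Matrix.vecMul, dotProduct]
    · simp [Matrix.mul_apply, Matrix.updateRow_ne hj, Matrix.one_apply]
  rw [this, Matrix.det_mul]
  congr 1
  have h2 := Matrix.det_updateRow_sum (1 : Matrix ι ι ℝ) i a
  have h3 : (∑ k, a k • (1 : Matrix ι ι ℝ) k) = a := by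
    ext k
    simp [Finset.sum_apply, Matrix.one_apply]
  rw [h3] at h2
  simpa using h2

/-- Wall-crossing formula. -/
lemma sgc_wall (v : Matrix ι ι ℝ) (w u : ι → ℝ) (hv : v.det ≠ 0)
    (hw : ∀ i, (v.updateRow i w).det ≠ 0) (hu : ∀ i, (v.updateRow i u).det ≠ 0)
    (hwu : ∀ i j, i ≠ j → ((v.updateRow i w).updateRow j u).det ≠ 0) :
    sgc v w - sgc v u = ∑ i, sgc (v.updateRow i u) w := by
  obtain ⟨a, ha⟩ := exists_coef hv (-w)
  obtain ⟨b, hb⟩ := exists_coef hv (-u)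
  have hw' : w = Matrix.vecMul (-a) v := by rw [Matrix.neg_vecMul, ha, neg_neg]
  have hu' : u = Matrix.vecMul (-b) v := by rw [Matrix.neg_vecMul, hb, neg_neg]
  have ha0 : ∀ i, a i ≠ 0 := by
    intro i h
    apply hw i
    rw [hw', det_updateRow_vecMul, Pi.neg_apply, h]; simp
  have hdu : ∀ i, (v.updateRow i u).det = - b i * v.det := by
    intro i
    rw [hu', det_updateRow_vecMul, Pi.neg_apply]
  have hb0 : ∀ i, b i ≠ 0 := by
    intro i h
    apply hu i
    rw [hdu, h]; simp
  have hab : ∀ i j, i ≠ j → a i * b j ≠ a j * b i := by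
    intro i j hij h
    apply hwu i j hij
    rw [← Matrix.exists_vecMul_eq_zero_iff]
    refine ⟨Function.update (Function.update (b i • a - a i • b) i (b i)) j (- a i), ?_, ?_⟩
    · intro h0
      have := congrFun h0 i
      rw [Function.update_of_ne hij, Function.update_self] at this
      exact hb0 i this
    · rw [vecMul_updateRow, vecMul_updateRow]
      simp only [Function.update_self, Function.update_idem]
      rw [Function.update_of_ne hij, Function.update_self]
      have : Function.update (Function.update (Function.update (b i • a - a i • b) i (b i)) j 0) i 0
          = b i • a - a i • b := by
        ext k
        by_cases hk : k = i
        · subst hk; simp; ring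
        · rw [Function.update_of_ne hk]
          by_cases hkj : k = j
          · subst hkj; simp; linarith
          · rw [Function.update_of_ne hkj, Function.update_of_ne hk]
      rw [this, Matrix.sub_vecMul, Matrix.smul_vecMul, Matrix.smul_vecMul, ha, hb]
      simp
  have e1 : sgc v w = (SignType.sign v.det : ℤ) * (if ∀ i, 0 < a i then (1 : ℤ) else 0) := by
    unfold sgc
    have : (∃ a : ι → ℝ, (∀ i, 0 < a i) ∧ Matrix.vecMul a v + w = 0) ↔ ∀ i, 0 < a i := by
      constructor
      · rintro ⟨a', h1, h2⟩
        have : a' = a := vecMul_inj hv (by rw [ha]; exact eq_neg_of_add_eq_zero_left h2)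
        exact this ▸ h1
      · intro h; exact ⟨a, h, by rw [ha]; simp⟩
    simp only [this, mul_ite, mul_one, mul_zero]
  have e2 : sgc v u = (SignType.sign v.det : ℤ) * (if ∀ i, 0 < b i then (1 : ℤ) else 0) := by
    unfold sgc
    have : (∃ a : ι → ℝ, (∀ i, 0 < a i) ∧ Matrix.vecMul a v + u = 0) ↔ ∀ i, 0 < b i := by
      constructor
      · rintro ⟨a', h1, h2⟩
        have : a' = b := vecMul_inj hv (by rw [hb]; exact eq_neg_of_add_eq_zero_left h2)
        exact this ▸ h1
      · intro h; exact ⟨b, h, by rw [hb]; simp⟩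
    simp only [this, mul_ite, mul_one, mul_zero]
  rw [e1, e2, ← mul_sub, ray_symm a b ha0 hb0 hab, Finset.mul_sum]
  apply Finset.sum_congr rfl
  intro i _
  set a' : ι → ℝ := Function.update (a - (a i / b i) • b) i (- a i / b i) with ha'
  have h1 : Matrix.vecMul a' (v.updateRow i u) = -w := by
    rw [vecMul_updateRow, ha']
    simp only [Function.update_idem, Function.update_self]
    have : Function.update (a - (a i / b i) • b) i 0 = a - (a i / b i) • b := by
      ext k
      by_cases hk : k = i
      · subst hk; have := hb0 k; simp; field_simp; ring
      · rw [Function.update_of_ne hk]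
    rw [this, Matrix.sub_vecMul, Matrix.smul_vecMul, ha, hb]
    ext k
    simp
    ring
  have hiff : (∃ x : ι → ℝ, (∀ i, 0 < x i) ∧ Matrix.vecMul x (v.updateRow i u) + w = 0) ↔
      ∀ j, 0 < a' j := by
    constructor
    · rintro ⟨x, h3, h2⟩
      have : x = a' := vecMul_inj (hu i) (by rw [h1]; exact eq_neg_of_add_eq_zero_left h2)
      exact this ▸ h3
    · intro h; exact ⟨a', h, by rw [h1]; simp⟩
  unfold sgc
  simp only [hiff, hdu]
  have hai : a' i = - a i / b i := by simp [ha']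
  have haj : ∀ j, j ≠ i → a' j = (a j * b i - a i * b j) / b i := by
    intro j hj
    rw [ha', Function.update_of_ne hj]
    have := hb0 i
    simp; field_simp
  have hiff2 : (∀ j, 0 < a' j) ↔ (0 < - a i / b i ∧ ∀ j, j ≠ i →
      0 < (a j * b i - a i * b j) / b i) := by
    constructor
    · intro h; exact ⟨hai ▸ h i, fun j hj => haj j hj ▸ h j⟩
    · rintro ⟨h2, h3⟩ j
      by_cases hj : j = i
      · subst hj; rw [hai]; exact h2
      · rw [haj j hj]; exact h3 j hj
  rw [sign_mul]
  rcases lt_or_gt_of_ne (hb0 i) with hneg | hpos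
  · have h3 : ¬ Enter a b i := fun h => absurd h.2.1 (not_lt.2 hneg.le)
    have h4 : (∀ j, 0 < a' j) ↔ Enter b a i := by
      rw [hiff2]
      unfold Enter
      constructor
      · rintro ⟨h5, h6⟩
        refine ⟨hneg, ?_, fun j hj => ?_⟩
        · rcases div_pos_iff.1 h5 with h | h <;> linarith [h.1, h.2]
        · rcases div_pos_iff.1 (h6 j hj) with h | h <;> linarith [h.1, h.2]
      · rintro ⟨h5, h6, h7⟩
        refine ⟨div_pos_of_neg_of_neg (by linarith) hneg, fun j hj => ?_⟩
        have := h7 j hj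
        exact div_pos_of_neg_of_neg (by linarith) hneg
    have h5 : SignType.sign (- b i) = 1 := sign_pos (by linarith)
    rw [h5, if_neg h3]
    simp only [h4]
    split_ifs <;> simp
  · have h3 : ¬ Enter b a i := fun h => absurd h.1 (not_lt.2 hpos.le)
    have h4 : (∀ j, 0 < a' j) ↔ Enter a b i := by
      rw [hiff2]
      unfold Enter
      constructor
      · rintro ⟨h5, h6⟩
        refine ⟨?_, hpos, fun j hj => ?_⟩
        · rcases div_pos_iff.1 h5 with h | h <;> linarith [h.1, h.2]
        · rcases div_pos_iff.1 (h6 j hj) with h | h <;> linarith [h.1, h.2]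
      · rintro ⟨h5, h6, h7⟩
        exact ⟨div_pos (by linarith) hpos, fun j hj => div_pos (h7 j hj) hpos⟩
    have h5 : SignType.sign (- b i) = -1 := sign_neg (by linarith)
    rw [h5, if_neg h3]
    simp only [h4]
    split_ifs <;> simp

lemma sgc_map (v : Matrix ι ι ℝ) (u : ι → ℝ) (T : (ι → ℝ) →ₗ[ℝ] (ι → ℝ))
    (hT : LinearMap.det T = 1) :
    sgc (Matrix.of fun i => T (v i)) (T u) = sgc v u := by
  have hm : (Matrix.of fun i => T (v i)) = v * (LinearMap.toMatrix' T).transpose := by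
    ext i k
    have : T (v i) = (LinearMap.toMatrix' T).mulVec (v i) := by
      rw [LinearMap.toMatrix'_mulVec]
    simp only [Matrix.of_apply, this, Matrix.mul_apply, Matrix.mulVec, dotProduct,
      Matrix.transpose_apply]
    exact Finset.sum_congr rfl fun j _ => mul_comm _ _
  have hd : (Matrix.of fun i => T (v i)).det = v.det := by
    rw [hm, Matrix.det_mul, Matrix.det_transpose, LinearMap.det_toMatrix', hT, mul_one]
  have hvm : ∀ a : ι → ℝ, Matrix.vecMul a (Matrix.of fun i => T (v i)) = T (Matrix.vecMul a v) := by
    intro a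
    have e1 : ∀ w : Matrix ι ι ℝ, Matrix.vecMul a w = ∑ i, a i • w i := by
      intro w; ext k; simp [Matrix.vecMul, dotProduct, Finset.sum_apply]
    rw [e1, e1, map_sum]
    simp only [map_smul]
    rfl
  have hinj : Function.Injective T := by
    have : IsUnit (LinearMap.det T) := by rw [hT]; exact isUnit_one
    exact ((Module.End.isUnit_iff T).1 ((LinearMap.isUnit_iff_isUnit_det T).2 this)).injective
  unfold sgc
  rw [hd]
  congr 1
  apply propext
  constructor
  · rintro ⟨a, h1, h2⟩
    refine ⟨a, h1, hinj ?_⟩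
    rw [map_add, map_zero, ← hvm, h2]
  · rintro ⟨a, h1, h2⟩
    refine ⟨a, h1, ?_⟩
    rw [hvm, ← map_add, h2, map_zero]

end Degree


section Degree2

/-- Index set of the `3 (r - 1)` points of colors `0, 1, 2`. -/
abbrev Idx (r : ℕ) := Fin 3 × {m : ZMod r // m ≠ 0}

/-- Triples of permutations of the labels. -/
abbrev Sym3 (r : ℕ) := Fin 3 → Equiv.Perm (ZMod r)

variable {r : ℕ} [hrF : Fact r.Prime]

/-- Product of the signs. -/
def sgnS (s : Sym3 r) : ℤ := ∏ k, ((Equiv.Perm.sign (s k) : ℤˣ) : ℤ)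

lemma sgnS_mul (s t : Sym3 r) : sgnS (s * t) = sgnS s * sgnS t := by
  unfold sgnS
  rw [← Finset.prod_mul_distrib]
  apply Finset.prod_congr rfl
  intro k _
  simp

lemma sgnS_single (k : Fin 3) (σ : Equiv.Perm (ZMod r)) :
    sgnS (Pi.mulSingle k σ) = (Equiv.Perm.sign σ : ℤ) := by
  unfold sgnS
  rw [Finset.prod_eq_single k]
  · simp
  · intro j _ hj
    rw [Pi.mulSingle_eq_of_ne hj]; simp
  · simp

/-- The matrix of shifted rows. -/
def rowm (T : ZMod r → (Idx r → ℝ) →ₗ[ℝ] (Idx r → ℝ)) (v : Idx r → Idx r → ℝ) (s : Sym3 r) :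
    Matrix (Idx r) (Idx r) ℝ := Matrix.of fun i => T (s i.1 i.2) (v i)

/-- The degree-like signed count. -/
noncomputable def DD (T : ZMod r → (Idx r → ℝ) →ₗ[ℝ] (Idx r → ℝ)) (v : Idx r → Idx r → ℝ)
    (w : Idx r → ℝ) : ℤ := ∑ s : Sym3 r, sgnS s * sgc (rowm T v s) w

/-- Genericity. -/
def GenQ {Q : Type*} (T : ZMod r → (Idx r → ℝ) →ₗ[ℝ] (Idx r → ℝ)) (z : Q → Idx r → ℝ) : Prop :=
  ∀ e : Idx r → Q, Function.Injective e → ∀ j : Idx r → ZMod r,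
    (Matrix.of fun i => T (j i) (z (e i))).det ≠ 0

lemma act_mulSingle (s : Sym3 r) (i i' : Idx r) (h : i' ≠ i) :
    (s * Pi.mulSingle i.1 (Equiv.swap (i.2 : ZMod r) 0) : Sym3 r) i'.1 i'.2 = s i'.1 i'.2 := by
  rw [Pi.mul_apply, Equiv.Perm.mul_apply]
  by_cases hk : i'.1 = i.1
  · rw [hk, Pi.mulSingle_eq_same, Equiv.swap_apply_of_ne_of_ne _ i'.2.2]
    intro h2
    exact h (Prod.ext hk (Subtype.ext h2))
  · rw [Pi.mulSingle_eq_of_ne hk]; rfl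

lemma sum_cancel (T : ZMod r → (Idx r → ℝ) →ₗ[ℝ] (Idx r → ℝ)) (v : Idx r → Idx r → ℝ)
    (w : Idx r → ℝ) (i : Idx r) (u : Sym3 r → Idx r → ℝ)
    (hu : ∀ s, u (s * Pi.mulSingle i.1 (Equiv.swap (i.2 : ZMod r) 0)) = u s) :
    ∑ s : Sym3 r, sgnS s * sgc ((rowm T v s).updateRow i (u s)) w = 0 := by
  set g : Sym3 r := Pi.mulSingle i.1 (Equiv.swap (i.2 : ZMod r) 0) with hg
  have hs : sgnS g = -1 := by
    rw [hg, sgnS_single, Equiv.Perm.sign_swap i.2.2]; simp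
  have h1 : ∑ s : Sym3 r, sgnS s * sgc ((rowm T v s).updateRow i (u s)) w =
      ∑ s : Sym3 r, sgnS (s * g) * sgc ((rowm T v (s * g)).updateRow i (u (s * g))) w :=
    (Equiv.sum_comp (Equiv.mulRight g)
      (fun s => sgnS s * sgc ((rowm T v s).updateRow i (u s)) w)).symm
  have h2 : ∀ s, (rowm T v (s * g)).updateRow i (u (s * g)) = (rowm T v s).updateRow i (u s) := by
    intro s
    rw [hu]
    ext i' k
    by_cases h : i' = i
    · subst h; simp
    · rw [Matrix.updateRow_ne h, Matrix.updateRow_ne h]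
      unfold rowm
      rw [Matrix.of_apply, Matrix.of_apply, hg, act_mulSingle s i i' h]
  simp only [h2, sgnS_mul, hs] at h1
  have h3 : ∑ s : Sym3 r, sgnS s * -1 * sgc ((rowm T v s).updateRow i (u s)) w =
     - ∑ s : Sym3 r, sgnS s * sgc ((rowm T v s).updateRow i (u s)) w := by
    rw [← Finset.sum_neg_distrib]
    apply Finset.sum_congr rfl
    intro s _; ring
  rw [h3] at h1
  linarith

section Generic

variable {Q : Type*} {T : ZMod r → (Idx r → ℝ) →ₗ[ℝ] (Idx r → ℝ)} {z : Q → Idx r → ℝ}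

lemma of_updateRow (T : ZMod r → (Idx r → ℝ) →ₗ[ℝ] (Idx r → ℝ)) (z : Q → Idx r → ℝ)
    (e : Idx r → Q) (j : Idx r → ZMod r) (i : Idx r) (q : Q) (a : ZMod r) :
    (Matrix.of fun i => T (j i) (z (e i))).updateRow i (T a (z q)) =
      Matrix.of fun i' => T (Function.update j i a i') (z (Function.update e i q i')) := by
  ext i' k
  by_cases h : i' = i
  · subst h; simp
  · rw [Matrix.updateRow_ne h]
    simp [Function.update_of_ne h]

lemma update_inj {α β : Type*} [DecidableEq α] {e : α → β} (he : Function.Injective e) (i : α) (q : β)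
    (hq : ∀ i', e i' ≠ q) : Function.Injective (Function.update e i q) := by
  intro a b hab
  by_cases ha : a = i <;> by_cases hb : b = i
  · rw [ha, hb]
  · subst ha
    rw [Function.update_self, Function.update_of_ne hb] at hab
    exact (hq b hab.symm).elim
  · subst hb
    rw [Function.update_self, Function.update_of_ne ha] at hab
    exact (hq a hab).elim
  · rw [Function.update_of_ne ha, Function.update_of_ne hb] at hab
    exact he hab

lemma gen_wall (hz : GenQ T z) (e : Idx r → Q) (he : Function.Injective e) (j : Idx r → ZMod r)
    (qw qu : Q) (hne : qw ≠ qu) (hw : ∀ i, e i ≠ qw) (hu : ∀ i, e i ≠ qu) (a b : ZMod r) :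
    sgc (Matrix.of fun i => T (j i) (z (e i))) (T a (z qw)) -
      sgc (Matrix.of fun i => T (j i) (z (e i))) (T b (z qu)) =
      ∑ i, sgc ((Matrix.of fun i => T (j i) (z (e i))).updateRow i (T b (z qu))) (T a (z qw)) := by
  apply sgc_wall
  · exact hz e he j
  · intro i; rw [of_updateRow]; exact hz _ (update_inj he i qw hw) _
  · intro i; rw [of_updateRow]; exact hz _ (update_inj he i qu hu) _
  · intro i i' hii
    rw [of_updateRow, of_updateRow]
    refine hz _ (update_inj (update_inj he i qw hw) i' qu ?_) _
    intro k
    by_cases hk : k = i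
    · subst hk; rw [Function.update_self]; exact hne
    · rw [Function.update_of_ne hk]; exact hu k

lemma DD_const (hT0 : T 0 = LinearMap.id) (hz : GenQ T z) (e : Idx r → Q)
    (he : Function.Injective e)
    (qw qu : Q) (hne : qw ≠ qu) (hw : ∀ i, e i ≠ qw) (hu : ∀ i, e i ≠ qu) :
    DD T (z ∘ e) (z qw) = DD T (z ∘ e) (z qu) := by
  rw [← sub_eq_zero]
  unfold DD
  rw [← Finset.sum_sub_distrib]
  have h1 : ∀ s : Sym3 r, sgnS s * sgc (rowm T (z ∘ e) s) (z qw) -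
      sgnS s * sgc (rowm T (z ∘ e) s) (z qu) =
      ∑ i, sgnS s * sgc ((rowm T (z ∘ e) s).updateRow i (z qu)) (z qw) := by
    intro s
    have := gen_wall hz e he (fun i => s i.1 i.2) qw qu hne hw hu 0 0
    rw [hT0] at this
    rw [← mul_sub, ← Finset.mul_sum]
    congr 1
  simp only [h1]
  rw [Finset.sum_comm]
  apply Finset.sum_eq_zero
  intro i _
  exact sum_cancel T (z ∘ e) (z qw) i (fun _ => z qu) (fun _ => rfl)

lemma det_T_one (hr : Odd r) (hT0 : T 0 = LinearMap.id) (hTa : ∀ i j, T (i + j) = T i ∘ₗ T j)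
    (j : ZMod r) : LinearMap.det (T j) = 1 := by
  have h1 : ∀ n : ℕ, LinearMap.det (T (n • j)) = LinearMap.det (T j) ^ n := by
    intro n
    induction n with
    | zero => simp [hT0]
    | succ n ih => rw [succ_nsmul, hTa, LinearMap.det_comp, ih, pow_succ]
  have h2 := h1 r
  have h3 : r • j = 0 := by simp
  rw [h3, hT0, LinearMap.det_id] at h2
  have := hr.pow_inj (a := LinearMap.det (T j)) (b := 1)
  rw [one_pow] at this
  exact this.1 h2.symm

lemma sign_addLeft (hr : Odd r) (j : ZMod r) : Equiv.Perm.sign (Equiv.addLeft j) = 1 := by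
  have h1 : (Equiv.addLeft j : Equiv.Perm (ZMod r)) ^ r = 1 := by
    ext x
    have : ∀ n : ℕ, ((Equiv.addLeft j : Equiv.Perm (ZMod r)) ^ n) x = n • j + x := by
      intro n
      induction n with
      | zero => simp
      | succ n ih => rw [pow_succ', Equiv.Perm.mul_apply, ih, Equiv.coe_addLeft, succ_nsmul]; ring
    rw [this]; simp
  have h2 := congrArg Equiv.Perm.sign h1
  rw [map_pow, map_one] at h2
  rcases Int.units_eq_one_or (Equiv.Perm.sign (Equiv.addLeft j)) with h | h
  · exact h
  · rw [h, hr.neg_one_pow] at h2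
    exact absurd h2 (by decide)

lemma sum_dvd (F : Sym3 r → ℤ) (hF : ∀ (j : ZMod r) s, F ((fun _ => Equiv.addLeft j) * s) = F s) :
    (r : ℤ) ∣ ∑ s, F s := by
  rw [← Finset.sum_fiberwise Finset.univ (fun s : Sym3 r => s 0 0) F]
  have h1 : ∀ j : ZMod r, ∑ s with s 0 0 = j, F s = ∑ s with s 0 0 = 0, F s := by
    intro j
    symm
    refine Finset.sum_bij' (fun s _ => (fun _ => Equiv.addLeft j) * s)
      (fun s _ => (fun _ => Equiv.addLeft (-j)) * s) ?_ ?_ ?_ ?_ ?_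
    · intro s hs
      simp only [Finset.mem_filter, Finset.mem_univ, true_and] at hs ⊢
      simp [hs]
    · intro s hs
      simp only [Finset.mem_filter, Finset.mem_univ, true_and] at hs ⊢
      simp [hs]
    · intro s _
      ext k x
      simp
    · intro s _
      ext k x
      simp
    · intro s _
      exact (hF j s).symm
  simp only [h1]
  simp

lemma DD_mod (hr : Odd r) (hT0 : T 0 = LinearMap.id) (hTa : ∀ i j, T (i + j) = T i ∘ₗ T j)
    (hz : GenQ T z) (e : Idx r → Q) (he : Function.Injective e) (i0 : Idx r)
    (qw qn : Q) (hne : qw ≠ qn) (hw : ∀ i, e i ≠ qw) (hu : ∀ i, e i ≠ qn) :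
    (r : ℤ) ∣ DD T (z ∘ e) (z qw) - DD T (z ∘ Function.update e i0 qn) (z qw) := by
  have h1 : ∀ s : Sym3 r, sgnS s * sgc (rowm T (z ∘ e) s) (z qw) =
      sgnS s * sgc (rowm T (z ∘ e) s) (T (s i0.1 i0.2) (z qn)) +
      ∑ i, sgnS s * sgc ((rowm T (z ∘ e) s).updateRow i (T (s i0.1 i0.2) (z qn))) (z qw) := by
    intro s
    have := gen_wall hz e he (fun i => s i.1 i.2) qw qn hne hw hu 0 (s i0.1 i0.2)
    rw [hT0] at this
    rw [← Finset.mul_sum, ← mul_add]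
    congr 1
    rw [← sub_eq_iff_eq_add']
    exact this
  have h2 : DD T (z ∘ e) (z qw) =
      ∑ s : Sym3 r, sgnS s * sgc (rowm T (z ∘ e) s) (T (s i0.1 i0.2) (z qn)) +
      DD T (z ∘ Function.update e i0 qn) (z qw) := by
    unfold DD
    simp only [h1]
    rw [Finset.sum_add_distrib]
    congr 1
    rw [Finset.sum_comm, Finset.sum_eq_single i0]
    · apply Finset.sum_congr rfl
      intro s _
      congr 2
      unfold rowm
      have := of_updateRow T z e (fun i => s i.1 i.2) i0 qn (s i0.1 i0.2)
      rw [Function.update_eq_self_iff.2 rfl] at this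
      exact this
    · intro i _ hi
      apply sum_cancel T (z ∘ e) (z qw) i (fun s => T (s i0.1 i0.2) (z qn))
      intro s
      show T ((s * Pi.mulSingle i.1 (Equiv.swap (i.2 : ZMod r) 0) : Sym3 r) i0.1 i0.2) (z qn) = _
      rw [act_mulSingle s i i0 hi.symm]
    · simp
  rw [h2, add_sub_cancel_right]
  apply sum_dvd
  intro j s
  have hs : sgnS ((fun _ => Equiv.addLeft j : Sym3 r) * s) = sgnS s := by
    rw [sgnS_mul]
    have : sgnS (fun _ => Equiv.addLeft j : Sym3 r) = 1 := by
      unfold sgnS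
      simp [sign_addLeft hr]
    rw [this, one_mul]
  rw [hs]
  congr 1
  have hr' : rowm T (z ∘ e) ((fun _ => Equiv.addLeft j : Sym3 r) * s) =
      Matrix.of fun i => T j (rowm T (z ∘ e) s i) := by
    ext i k
    show T (j + s i.1 i.2) (z (e i)) k = T j (T (s i.1 i.2) (z (e i))) k
    rw [hTa]; rfl
  have hu' : T (((fun _ => Equiv.addLeft j : Sym3 r) * s) i0.1 i0.2) (z qn) =
      T j (T (s i0.1 i0.2) (z qn)) := by
    simp [hTa]
  rw [hr', hu', sgc_map _ _ _ (det_T_one hr hT0 hTa j)]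

end Generic

end Degree2


section Dependence

/-- The vectors `u q` have a convex dependency. -/
def Kdep {Q X : Type*} [Fintype Q] (u : Q → X → ℝ) : Prop :=
  ∃ a ∈ stdSimplex ℝ Q, ∑ q, a q • u q = 0

lemma isClosed_Kdep (Q X : Type*) [Fintype Q] [Fintype X] :
    IsClosed {u : Q → X → ℝ | Kdep u} := by
  haveI : CompactSpace (stdSimplex ℝ Q) := isCompact_iff_compactSpace.1 (isCompact_stdSimplex ℝ Q)
  have h1 : IsClosed {p : (stdSimplex ℝ Q) × (Q → X → ℝ) | ∑ q, (p.1 : Q → ℝ) q • p.2 q = 0} := by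
    apply isClosed_eq
    · apply continuous_finset_sum
      intro q _
      exact ((continuous_apply q).comp (continuous_subtype_val.comp continuous_fst)).smul
        ((continuous_apply q).comp continuous_snd)
    · exact continuous_const
  have h2 := isClosedMap_snd_of_compactSpace (X := stdSimplex ℝ Q) (Y := Q → X → ℝ) _ h1
  convert h2 using 1
  ext u
  constructor
  · rintro ⟨a, ha, h⟩
    exact ⟨(⟨a, ha⟩, u), h, rfl⟩
  · rintro ⟨⟨a, u'⟩, h, rfl⟩
    exact ⟨a, a.2, h⟩

lemma dense_ne {E A : Type*} [NormedAddCommGroup E] [NormedSpace ℝ E] [CompleteSpace E] [Finite A]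
    (P : A → E → ℝ) (hP : ∀ a, AnalyticOnNhd ℝ (P a) Set.univ) (hg : ∀ a, ∃ g, P a g ≠ 0) :
    Dense {z | ∀ a, P a z ≠ 0} := by
  have h1 : {z | ∀ a, P a z ≠ 0} = ⋂ a, {z | P a z ≠ 0} := by
    ext z; simp
  rw [h1]
  apply dense_iInter_of_isOpen
  · intro a
    have hc : Continuous (P a) := by
      rw [← continuousOn_univ]
      exact (hP a).continuousOn
    exact isOpen_ne_fun hc continuous_const
  · intro a
    rw [dense_iff_inter_open]
    intro U hU hne
    by_contra hcon
    obtain ⟨z0, hz0⟩ := hne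
    obtain ⟨g, hg⟩ := hg a
    have h2 : P a =ᶠ[nhds z0] (fun _ => 0) := by
      filter_upwards [hU.mem_nhds hz0] with z hz
      by_contra h
      exact hcon ⟨z, hz, h⟩
    have := AnalyticOnNhd.eq_of_eventuallyEq (hP a) analyticOnNhd_const h2
    exact hg (congrFun this g)

lemma analytic_det {E n : Type*} [NormedAddCommGroup E] [NormedSpace ℝ E] [Fintype n]
    [DecidableEq n] (M : E → Matrix n n ℝ)
    (hM : ∀ i j, AnalyticOnNhd ℝ (fun z => M z i j) Set.univ) :
    AnalyticOnNhd ℝ (fun z => (M z).det) Set.univ := by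
  simp only [Matrix.det_apply']
  apply Finset.analyticOnNhd_fun_sum
  intro σ _
  apply AnalyticOnNhd.mul analyticOnNhd_const
  apply Finset.analyticOnNhd_fun_prod
  intro i _
  exact hM _ _

end Dependence

section Degree3

variable {r : ℕ} [hrF : Fact r.Prime]

/-- Extension by zero. -/
noncomputable def ext0 (u : Idx r → ℝ) (k : Fin 3) (m : ZMod r) : ℝ :=
  if h : m ≠ 0 then u (k, ⟨m, h⟩) else 0

/-- The shift operator. -/
noncomputable def TT (j : ZMod r) : (Idx r → ℝ) →ₗ[ℝ] (Idx r → ℝ) where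
  toFun u i := ext0 u i.1 (i.2 - j) - ext0 u i.1 (-j)
  map_add' u v := by
    ext i
    simp only [ext0, Pi.add_apply]
    split_ifs <;> ring
  map_smul' c u := by
    ext i
    simp only [ext0, Pi.smul_apply, smul_eq_mul, RingHom.id_apply]
    split_ifs <;> ring

lemma TT_apply (j : ZMod r) (u : Idx r → ℝ) (i : Idx r) :
    TT j u i = ext0 u i.1 (i.2 - j) - ext0 u i.1 (-j) := rfl

lemma ext0_zero (u : Idx r → ℝ) (k : Fin 3) : ext0 u k 0 = 0 := by simp [ext0]

lemma ext0_TT (j : ZMod r) (u : Idx r → ℝ) (k : Fin 3) (m : ZMod r) :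
    ext0 (TT j u) k m = ext0 u k (m - j) - ext0 u k (-j) := by
  by_cases h : m ≠ 0
  · conv_lhs => unfold ext0
    rw [dif_pos h, TT_apply]
  · push Not at h
    subst h
    simp [ext0_zero]

lemma TT_zero : (TT 0 : (Idx r → ℝ) →ₗ[ℝ] (Idx r → ℝ)) = LinearMap.id := by
  ext1 i
  ext k
  rw [LinearMap.comp_apply, LinearMap.comp_apply, TT_apply]
  simp only [sub_zero, neg_zero, ext0_zero]
  unfold ext0
  rw [dif_pos k.2.2]
  rfl

lemma TT_add (i j : ZMod r) : (TT (i + j) : (Idx r → ℝ) →ₗ[ℝ] (Idx r → ℝ)) = TT i ∘ₗ TT j := by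
  apply LinearMap.ext
  intro u
  ext k
  rw [LinearMap.comp_apply, TT_apply, TT_apply, ext0_TT, ext0_TT]
  have h1 : (k.2 : ZMod r) - (i + j) = k.2 - i - j := by ring
  have h2 : -(i + j) = -i - j := by ring
  rw [h1, h2]; ring

/-- The tensor `x ⊗ w_j`. -/
noncomputable def WW (x : Fin 3 → ℝ) (j : ZMod r) : Idx r → ℝ :=
  fun i => x i.1 * ((if (i.2 : ZMod r) = j then 1 else 0) - (if (0 : ZMod r) = j then 1 else 0))

lemma ext0_WW (x : Fin 3 → ℝ) (j : ZMod r) (k : Fin 3) (m : ZMod r) :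
    ext0 (WW x j) k m = x k * ((if m = j then 1 else 0) - (if (0 : ZMod r) = j then 1 else 0)) := by
  by_cases h : m ≠ 0
  · unfold ext0
    rw [dif_pos h]
    rfl
  · push Not at h
    subst h
    simp [ext0_zero]

lemma TT_WW (x : Fin 3 → ℝ) (i j : ZMod r) : TT i (WW x j) = WW x (i + j) := by
  ext k
  rw [TT_apply, ext0_WW, ext0_WW]
  unfold WW
  have h1 : (k.2 : ZMod r) - i = j ↔ (k.2 : ZMod r) = i + j := by
    rw [sub_eq_iff_eq_add, add_comm]
  have h2 : -i = j ↔ (0 : ZMod r) = i + j := by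
    rw [neg_eq_iff_add_eq_zero, eq_comm]
  simp only [h1, h2]
  ring

lemma dep_WW {Q : Type*} [Fintype Q] (a : Q → ℝ) (x : Q → Fin 3 → ℝ) (j : Q → ZMod r)
    (h : ∑ q, a q • WW (x q) (j q) = 0) (k : Fin 3) (m : ZMod r) :
    ∑ q, a q * (x q k * if j q = m then 1 else 0) =
      ∑ q, a q * (x q k * if j q = 0 then 1 else 0) := by
  by_cases hm : m = 0
  · rw [hm]
  · have := congrFun h (k, ⟨m, hm⟩)
    simp only [Finset.sum_apply, Pi.smul_apply, smul_eq_mul, WW, Pi.zero_apply] at this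
    rw [← sub_eq_zero, ← Finset.sum_sub_distrib]
    refine Eq.trans ?_ this
    apply Finset.sum_congr rfl
    intro q _
    simp only [eq_comm (a := m), eq_comm (a := (0 : ZMod r))]
    ring

lemma DD_chain {T : ZMod r → (Idx r → ℝ) →ₗ[ℝ] (Idx r → ℝ)} (hr : Odd r)
    (hT0 : T 0 = LinearMap.id) (hTa : ∀ i j, T (i + j) = T i ∘ₗ T j)
    (z : (Idx r ⊕ Idx r) ⊕ Bool → Idx r → ℝ) (hz : GenQ T z) :
    (r : ℤ) ∣ DD T (fun i => z (Sum.inl (Sum.inl i))) (z (Sum.inr false)) -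
      DD T (fun i => z (Sum.inl (Sum.inr i))) (z (Sum.inr true)) := by
  set e : Finset (Idx r) → Idx r → (Idx r ⊕ Idx r) ⊕ Bool := fun A i =>
    if i ∈ A then Sum.inl (Sum.inr i) else Sum.inl (Sum.inl i) with he
  have hei : ∀ A, Function.Injective (e A) := by
    intro A a b hab
    simp only [he] at hab
    split_ifs at hab <;> simpa using hab
  have hne : ∀ A i b, e A i ≠ Sum.inr b := by
    intro A i b
    simp only [he]
    split_ifs <;> simp
  have h1 : ∀ A, (r : ℤ) ∣ DD T (z ∘ e ∅) (z (Sum.inr false)) - DD T (z ∘ e A) (z (Sum.inr false)) := by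
    intro A
    induction A using Finset.induction_on with
    | empty => simp
    | insert a A ha ih =>
      have h2 : e (insert a A) = Function.update (e A) a (Sum.inl (Sum.inr a)) := by
        ext1 i
        by_cases hi : i = a
        · subst hi; simp [he]
        · rw [Function.update_of_ne hi]; simp [he, hi]
      rw [h2]
      have h3 := DD_mod hr hT0 hTa hz (e A) (hei A) a (Sum.inr false) (Sum.inl (Sum.inr a))
        (by simp) (fun i => hne A i false) (by
          intro i
          simp only [he]
          split_ifs with hi
          · intro h
            have : i = a := by simpa using h
            exact ha (this ▸ hi)
          · simp)
      have := dvd_add ih h3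
      simpa using this
  have h4 := h1 Finset.univ
  rw [DD_const hT0 hz (e Finset.univ) (hei _) (Sum.inr false) (Sum.inr true) (by simp)
    (fun i => hne _ i _) (fun i => hne _ i _)] at h4
  have h5 : z ∘ e ∅ = fun i => z (Sum.inl (Sum.inl i)) := by ext1 i; simp [he]
  have h6 : z ∘ e Finset.univ = fun i => z (Sum.inl (Sum.inr i)) := by ext1 i; simp [he]
  rw [h5, h6] at h4
  exact h4

lemma card_fix : (Finset.univ.filter fun σ : Equiv.Perm (ZMod r) => σ 0 = 0).card
    = (r - 1).factorial := by
  have hr0 : 0 < r := hrF.out.pos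
  have h0 : Fintype.card (Equiv.Perm (ZMod r)) = r.factorial := by
    rw [Fintype.card_perm, ZMod.card]
  have h1 : ∑ j : ZMod r, (Finset.univ.filter fun σ : Equiv.Perm (ZMod r) => σ 0 = j).card
      = r.factorial := by
    rw [← h0, ← Finset.card_univ]
    exact (Finset.card_eq_sum_card_fiberwise (fun σ _ => Finset.mem_univ _)).symm
  have h2 : ∀ j : ZMod r, (Finset.univ.filter fun σ : Equiv.Perm (ZMod r) => σ 0 = j).card =
      (Finset.univ.filter fun σ : Equiv.Perm (ZMod r) => σ 0 = 0).card := by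
    intro j
    refine Finset.card_bij' (fun σ _ => Equiv.addLeft (-j) * σ) (fun σ _ => Equiv.addLeft j * σ)
      ?_ ?_ ?_ ?_
    · intro σ hσ
      simp only [Finset.mem_filter, Finset.mem_univ, true_and] at hσ ⊢
      simp [hσ]
    · intro σ hσ
      simp only [Finset.mem_filter, Finset.mem_univ, true_and] at hσ ⊢
      simp [hσ]
    · intro σ _; ext x; simp
    · intro σ _; ext x; simp
  simp only [h2] at h1
  rw [Finset.sum_const, Finset.card_univ, ZMod.card, smul_eq_mul] at h1
  have h3 : r * (r - 1).factorial = r.factorial := Nat.mul_factorial_pred hr0.ne'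
  rw [← h3] at h1
  exact Nat.eq_of_mul_eq_mul_left hr0 h1

lemma good_card : ¬ (r : ℤ) ∣
    ((Finset.univ.filter fun s : Sym3 r => ∀ k, s k 0 = 0).card : ℤ) := by
  have h1 : (Finset.univ.filter fun s : Sym3 r => ∀ k, s k 0 = 0) =
      Fintype.piFinset fun _ : Fin 3 => Finset.univ.filter fun σ : Equiv.Perm (ZMod r) => σ 0 = 0 := by
    ext s; simp [Fintype.mem_piFinset]
  rw [h1, Fintype.card_piFinset]
  rw [Int.natCast_dvd_natCast]
  simp only [card_fix, Finset.prod_const]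
  intro h
  have := hrF.out.dvd_of_dvd_pow h
  rw [hrF.out.dvd_factorial] at this
  have := hrF.out.pos
  omega

end Degree3


section Degree4

variable {r : ℕ} [hrF : Fact r.Prime]

lemma dense_GenQ (Q : Type*) [Fintype Q] :
    Dense {z : Q → Idx r → ℝ | GenQ TT z} := by
  have h1 : {z : Q → Idx r → ℝ | GenQ TT z} =
      {z | ∀ a : {e : Idx r → Q // Function.Injective e} × (Idx r → ZMod r),
        (Matrix.of fun i => TT (a.2 i) (z (a.1.1 i))).det ≠ 0} := by
    ext z
    constructor
    · intro h a; exact h a.1.1 a.1.2 a.2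
    · intro h e he j; exact h (⟨e, he⟩, j)
  rw [h1]
  apply dense_ne
  · rintro ⟨⟨e, he⟩, j⟩
    apply analytic_det
    intro i k
    have : (fun z : Q → Idx r → ℝ => (Matrix.of fun i => TT (j i) (z (e i))) i k) =
        (LinearMap.toContinuousLinearMap ((LinearMap.proj k ∘ₗ TT (j i)) ∘ₗ
          (LinearMap.proj (e i) : (Q → Idx r → ℝ) →ₗ[ℝ] (Idx r → ℝ)))) := by
      ext z; rfl
    show AnalyticOnNhd ℝ (fun z : Q → Idx r → ℝ => (Matrix.of fun i => TT (j i) (z (e i))) i k) _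
    rw [this]
    exact ContinuousLinearMap.analyticOnNhd _ _
  · rintro ⟨⟨e, he⟩, j⟩
    refine ⟨fun q => if h : ∃ i, e i = q then TT (- j h.choose) (Pi.single h.choose 1) else 0, ?_⟩
    have h2 : (Matrix.of fun i => TT (j i) ((fun q => if h : ∃ i, e i = q then
        TT (- j h.choose) (Pi.single h.choose 1) else 0) (e i))) = (1 : Matrix (Idx r) (Idx r) ℝ) := by
      ext i k
      have hex : ∃ i', e i' = e i := ⟨i, rfl⟩
      have hch : hex.choose = i := he hex.choose_spec
      simp only [Matrix.of_apply]
      rw [dif_pos hex, hch, ← LinearMap.comp_apply, ← TT_add, add_neg_cancel, TT_zero]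
      simp [Matrix.one_apply, Pi.single_apply, eq_comm]
    simp only [] at h2 ⊢
    rw [h2]
    simp

/-- The special configuration. -/
noncomputable def spec (s : Sym3 r) : Option (Idx r) → Idx r → ℝ
  | none => WW 1 0
  | some i => WW (Pi.single i.1 1) (s i.1 i.2)

lemma spec_bad (s : Sym3 r) (hs : ¬ ∀ k, s k 0 = 0) : ¬ Kdep (spec s) := by
  rintro ⟨a, ha, h⟩
  push Not at hs
  obtain ⟨k0, hk0⟩ := hs
  set x : Option (Idx r) → Fin 3 → ℝ := fun q => q.elim 1 (fun i => Pi.single i.1 1) with hx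
  set j : Option (Idx r) → ZMod r := fun q => q.elim 0 (fun i => s i.1 i.2) with hj
  have h' : ∑ q, a q • WW (x q) (j q) = 0 := by
    rw [← h]
    apply Finset.sum_congr rfl
    intro q _
    cases q <;> rfl
  have hd := dep_WW a x j h'
  have ha0 := ha.1
  have hG : ∀ k m, ∑ q, a q * (x q k * if j q = m then 1 else 0) =
      a none * (if 0 = m then 1 else 0) +
        ∑ i : Idx r, a (some i) * ((Pi.single i.1 1 : Fin 3 → ℝ) k *
          if s i.1 i.2 = m then 1 else 0) := by
    intro k m
    rw [Fintype.sum_option]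
    simp [hx, hj]
  have hz : ∀ k, ∑ i : Idx r, a (some i) * ((Pi.single i.1 1 : Fin 3 → ℝ) k *
          if s i.1 i.2 = s k 0 then 1 else 0) = 0 := by
    intro k
    apply Finset.sum_eq_zero
    intro i _
    by_cases hk : i.1 = k
    · rw [if_neg]
      · simp
      · intro h2
        rw [hk] at h2
        exact i.2.2 ((s k).injective h2)
    · rw [Pi.single_eq_of_ne (fun h => hk h.symm)]; simp
  have hnn : ∀ k m i, 0 ≤ a (some i) * ((Pi.single i.1 1 : Fin 3 → ℝ) k *
          if s i.1 i.2 = m then 1 else 0) := by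
    intro k m i
    apply mul_nonneg (ha0 _)
    apply mul_nonneg
    · by_cases hk : k = i.1
      · subst hk; simp
      · rw [Pi.single_eq_of_ne hk]
    · split_ifs <;> norm_num
  have hn : a none = 0 := by
    have e1 := hd k0 (s k0 0)
    rw [hG, hG, hz, if_neg (fun h => hk0 h.symm)] at e1
    have e2 := Finset.sum_nonneg (fun i (_ : i ∈ (Finset.univ : Finset (Idx r))) => hnn k0 0 i)
    have := ha0 none
    simp only [if_true, mul_one, mul_zero, add_zero] at e1
    linarith
  have hs0 : ∀ i, a (some i) = 0 := by
    intro i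
    have e1 := (hd i.1 (s i.1 i.2)).trans (hd i.1 (s i.1 0)).symm
    rw [hG, hG, hz, hn] at e1
    simp only [zero_mul, zero_add] at e1
    rw [Finset.sum_eq_zero_iff_of_nonneg (fun i' _ => hnn _ _ i')] at e1
    have := e1 i (Finset.mem_univ _)
    simpa using this
  have hsum := ha.2
  rw [Fintype.sum_option, hn] at hsum
  simp [hs0] at hsum

lemma spec_good (s : Sym3 r) (hs : ∀ k, s k 0 = 0) :
    (Matrix.of fun i => spec s (some i) : Matrix (Idx r) (Idx r) ℝ).det = (sgnS s : ℝ) ∧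
    Matrix.vecMul 1 (Matrix.of fun i => spec s (some i) : Matrix (Idx r) (Idx r) ℝ) =
      - spec s none := by
  have hp : ∀ k, ∀ x : ZMod r, s k x ≠ 0 ↔ x ≠ 0 := by
    intro k x
    rw [not_iff_not]
    constructor
    · intro h; rw [← hs k] at h; exact (s k).injective h
    · rintro rfl; exact hs k
  set τ : Fin 3 → Equiv.Perm {m : ZMod r // m ≠ 0} := fun k => (s k).subtypePerm (hp k) with hτ
  have hM : (Matrix.of fun i => spec s (some i) : Matrix (Idx r) (Idx r) ℝ) =
      (1 : Matrix (Idx r) (Idx r) ℝ).submatrix (Equiv.prodCongrRight τ) id := by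
    ext ⟨k, m⟩ ⟨k', m'⟩
    simp only [Matrix.of_apply, spec, WW, Matrix.submatrix_apply, id, Matrix.one_apply,
      Equiv.prodCongrRight_apply, Prod.mk.injEq]
    have h0 : ¬ (0 : ZMod r) = s k m := fun h => ((hp k m).2 m.2) h.symm
    rw [if_neg h0]
    by_cases hk : k = k'
    · subst hk
      simp [hτ, Subtype.ext_iff, eq_comm]
    · rw [Pi.single_eq_of_ne (fun h => hk h.symm)]
      simp [hk]
  rw [hM]
  constructor
  · rw [Matrix.det_permute, Matrix.det_one, mul_one, Equiv.Perm.sign_prodCongrRight]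
    unfold sgnS
    push_cast
    apply Finset.prod_congr rfl
    intro k _
    rw [hτ]
    congr 2
    rw [Equiv.Perm.sign_subtypePerm]
    intro x hx h0
    rw [h0] at hx
    exact hx (hs k)
  · ext i
    simp only [Matrix.vecMul, dotProduct, Matrix.submatrix_apply, id, Pi.one_apply, one_mul,
      Matrix.one_apply]
    rw [Equiv.sum_comp (Equiv.prodCongrRight τ) (fun x => if x = i then (1 : ℝ) else 0)]
    simp [spec, WW, i.2.2]

lemma sgnS_cases (s : Sym3 r) : sgnS s = 1 ∨ sgnS s = -1 := by
  have : sgnS s = ((∏ k, Equiv.Perm.sign (s k) : ℤˣ) : ℤ) := by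
    unfold sgnS; push_cast; rfl
  rw [this]
  rcases Int.units_eq_one_or (∏ k, Equiv.Perm.sign (s k)) with h | h <;> rw [h] <;> simp

lemma sgc_of_adj {ι : Type*} [Fintype ι] [DecidableEq ι] (M : Matrix ι ι ℝ) (u : ι → ℝ)
    (h : ∀ i, 0 < M.det * Matrix.vecMul (-u) M.adjugate i) (hd : M.det ≠ 0) :
    sgc M u = ((SignType.sign M.det : SignType) : ℤ) := by
  unfold sgc
  rw [if_pos]
  refine ⟨M.det⁻¹ • Matrix.vecMul (-u) M.adjugate, fun i => ?_, ?_⟩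
  · have h1 := h i
    rw [Pi.smul_apply, smul_eq_mul]
    have : M.det⁻¹ * Matrix.vecMul (-u) M.adjugate i =
      (M.det⁻¹) ^ 2 * (M.det * Matrix.vecMul (-u) M.adjugate i) := by field_simp
    rw [this]
    positivity
  · rw [Matrix.smul_vecMul, Matrix.vecMul_vecMul, Matrix.adjugate_mul, Matrix.vecMul_smul,
      Matrix.vecMul_one, smul_smul, inv_mul_cancel₀ hd]
    simp

lemma Kdep_of_sgc {ι : Type*} [Fintype ι] [DecidableEq ι] (M : Matrix ι ι ℝ) (u : ι → ℝ)
    (h : sgc M u ≠ 0) : Kdep (fun q : Option ι => q.elim u M) := by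
  unfold sgc at h
  split_ifs at h with h1
  · obtain ⟨a, ha, h2⟩ := h1
    set S : ℝ := 1 + ∑ i, a i with hS
    have hSp : 0 < S := by
      have : 0 ≤ ∑ i, a i := Finset.sum_nonneg fun i _ => (ha i).le
      linarith
    refine ⟨fun q => S⁻¹ * q.elim 1 a, ⟨fun q => ?_, ?_⟩, ?_⟩
    · cases q with
      | none => simp; positivity
      | some i => simp; have := ha i; positivity
    · rw [← Finset.mul_sum, Fintype.sum_option]
      simp only [Option.elim]
      rw [← hS, inv_mul_cancel₀ hSp.ne']
    · have e1 : ∑ q : Option ι, (S⁻¹ * q.elim 1 a) • (q.elim u M : ι → ℝ) =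
          S⁻¹ • (Matrix.vecMul a M + u) := by
        rw [Fintype.sum_option]
        ext k
        simp [Matrix.vecMul, dotProduct, mul_add, Finset.mul_sum, Finset.sum_apply, mul_assoc]
        simp only [← mul_assoc]
        rw [add_comm]
        rfl
      rw [e1, h2, smul_zero]
  · exact absurd rfl h

/-- Existence of a colored Tverberg dependency. -/
theorem exists_dep (hr : Odd r) (x : Option (Idx r) → Fin 3 → ℝ) :
    ∃ s : Sym3 r, Kdep (fun q : Option (Idx r) =>
      WW (x q) (q.elim 0 (fun i => s i.1 i.2))) := by
  set z0 : (Idx r ⊕ Idx r) ⊕ Bool → Idx r → ℝ := Sum.elim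
    (Sum.elim (fun i => WW (x (some i)) 0) (fun i => WW (Pi.single i.1 1) 0))
    (fun b => if b then WW 1 0 else WW (x none) 0) with hz0
  -- the two families of matrices
  set M1 : ((Idx r ⊕ Idx r) ⊕ Bool → Idx r → ℝ) → Sym3 r → Matrix (Idx r) (Idx r) ℝ :=
    fun z s => rowm TT (fun i => z (Sum.inl (Sum.inl i))) s with hM1
  set M2 : ((Idx r ⊕ Idx r) ⊕ Bool → Idx r → ℝ) → Sym3 r → Matrix (Idx r) (Idx r) ℝ :=
    fun z s => rowm TT (fun i => z (Sum.inl (Sum.inr i))) s with hM2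
  have hTc : ∀ j : ZMod r, Continuous (TT j) := fun j => LinearMap.continuous_of_finiteDimensional _
  have hM1c : ∀ s, Continuous fun z => M1 z s := by
    intro s
    apply continuous_pi
    intro i
    exact (hTc _).comp (continuous_apply _)
  have hM2c : ∀ s, Continuous fun z => M2 z s := by
    intro s
    apply continuous_pi
    intro i
    exact (hTc _).comp (continuous_apply _)
  have hM20 : ∀ s, M2 z0 s = Matrix.of fun i => spec s (some i) := by
    intro s
    funext i
    show TT (s i.1 i.2) (WW (Pi.single i.1 1) 0) = WW (Pi.single i.1 1) (s i.1 i.2)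
    rw [TT_WW, add_zero]
  have hz2 : ∀ s : Sym3 r, z0 (Sum.inr true) = spec s none := fun s => rfl
  by_contra hcon
  push Not at hcon
  have E1 : ∀ s : Sym3 r, ∀ᶠ z in nhds z0,
      ¬ Kdep (fun q : Option (Idx r) => q.elim (z (Sum.inr false)) (M1 z s)) := by
    intro s
    have hc : Continuous fun z : (Idx r ⊕ Idx r) ⊕ Bool → Idx r → ℝ =>
        (fun q : Option (Idx r) => (q.elim (z (Sum.inr false)) (M1 z s) : Idx r → ℝ)) := by
      apply continuous_pi
      intro q
      cases q with
      | none => exact continuous_apply _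
      | some i => exact (continuous_apply i).comp (hM1c s)
    have hcl := (isClosed_Kdep (Option (Idx r)) (Idx r)).isOpen_compl.preimage hc
    apply hcl.mem_nhds
    intro hk
    apply hcon s
    have hk2 : Kdep _ := hk
    refine (congrArg Kdep ?_).mpr hk2
    ext1 q
    cases q with
    | none => rfl
    | some i =>
      show WW (x (some i)) (s i.1 i.2) = TT (s i.1 i.2) (WW (x (some i)) 0)
      rw [TT_WW, add_zero]
  have E2 : ∀ s : Sym3 r, (¬ ∀ k, s k 0 = 0) → ∀ᶠ z in nhds z0,
      ¬ Kdep (fun q : Option (Idx r) => q.elim (z (Sum.inr true)) (M2 z s)) := by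
    intro s hs
    have hc : Continuous fun z : (Idx r ⊕ Idx r) ⊕ Bool → Idx r → ℝ =>
        (fun q : Option (Idx r) => (q.elim (z (Sum.inr true)) (M2 z s) : Idx r → ℝ)) := by
      apply continuous_pi
      intro q
      cases q with
      | none => exact continuous_apply _
      | some i => exact (continuous_apply i).comp (hM2c s)
    have hcl := (isClosed_Kdep (Option (Idx r)) (Idx r)).isOpen_compl.preimage hc
    apply hcl.mem_nhds
    intro hk
    apply spec_bad s hs
    have hk2 : Kdep _ := hk
    refine (congrArg Kdep ?_).mpr hk2
    ext1 q
    cases q with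
    | none => rfl
    | some i =>
      show _ = M2 z0 s i
      rw [hM20 s]
      rfl
  have E3 : ∀ s : Sym3 r, (∀ k, s k 0 = 0) → ∀ᶠ z in nhds z0,
      sgc (M2 z s) (z (Sum.inr true)) = sgnS s := by
    intro s hs
    obtain ⟨g1, g2⟩ := spec_good s hs
    have hsq : (sgnS s : ℝ) * sgnS s = 1 := by
      rcases sgnS_cases s with h | h <;> rw [h] <;> norm_num
    have hdc : Continuous fun z => (M2 z s).det := (hM2c s).matrix_det
    have hac : Continuous fun z => Matrix.vecMul (- z (Sum.inr true)) (M2 z s).adjugate :=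
      Continuous.matrix_vecMul (continuous_apply _).neg (hM2c s).matrix_adjugate
    have f1 : ∀ᶠ z in nhds z0, 0 < (M2 z s).det * sgnS s := by
      apply (isOpen_lt continuous_const (hdc.mul continuous_const)).mem_nhds
      show (0 : ℝ) < (M2 z0 s).det * sgnS s
      rw [hM20, g1, hsq]; norm_num
    have f2 : ∀ᶠ z in nhds z0, ∀ i, 0 < (M2 z s).det *
        Matrix.vecMul (- z (Sum.inr true)) (M2 z s).adjugate i := by
      rw [Filter.eventually_all]
      intro i
      apply (isOpen_lt continuous_const (hdc.mul ((continuous_apply i).comp hac))).mem_nhds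
      show (0 : ℝ) < (M2 z0 s).det * Matrix.vecMul (- z0 (Sum.inr true)) (M2 z0 s).adjugate i
      rw [hz2 s, hM20, ← g2, Matrix.vecMul_vecMul, Matrix.mul_adjugate, Matrix.vecMul_smul,
        Matrix.vecMul_one, g1]
      simp [hsq]
    filter_upwards [f1, f2] with z h1 h2
    have hd : (M2 z s).det ≠ 0 := by
      intro h; rw [h] at h1; simp at h1
    rw [sgc_of_adj _ _ h2 hd]
    rcases sgnS_cases s with h | h
    · rw [h] at h1 ⊢
      rw [sign_pos (by simpa using h1)]; rfl
    · rw [h] at h1 ⊢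
      rw [sign_neg (by push_cast at h1; linarith)]; rfl
  have E : ∀ᶠ z in nhds z0, ∀ s : Sym3 r,
      (¬ Kdep (fun q : Option (Idx r) => q.elim (z (Sum.inr false)) (M1 z s))) ∧
      ((¬ ∀ k, s k 0 = 0) →
        ¬ Kdep (fun q : Option (Idx r) => q.elim (z (Sum.inr true)) (M2 z s))) ∧
      ((∀ k, s k 0 = 0) → sgc (M2 z s) (z (Sum.inr true)) = sgnS s) := by
    rw [Filter.eventually_all]
    intro s
    by_cases hs : ∀ k, s k 0 = 0
    · filter_upwards [E1 s, E3 s hs] with z h1 h3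
      exact ⟨h1, fun h => absurd hs h, fun _ => h3⟩
    · filter_upwards [E1 s, E2 s hs] with z h1 h2
      exact ⟨h1, fun _ => h2, fun h => absurd h hs⟩
  obtain ⟨U, hU, hUo, hz0U⟩ := eventually_nhds_iff.1 E
  obtain ⟨z, hzU, hz⟩ := (dense_GenQ (r := r) ((Idx r ⊕ Idx r) ⊕ Bool)).inter_open_nonempty U hUo
    ⟨z0, hz0U⟩
  have hall := hU z hzU
  have hdvd := DD_chain hr TT_zero TT_add z hz
  have hA : DD TT (fun i => z (Sum.inl (Sum.inl i))) (z (Sum.inr false)) = 0 := by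
    apply Finset.sum_eq_zero
    intro s _
    have : sgc (M1 z s) (z (Sum.inr false)) = 0 := by
      by_contra h
      exact (hall s).1 (Kdep_of_sgc _ _ h)
    show sgnS s * sgc (M1 z s) _ = 0
    rw [this, mul_zero]
  have hB : DD TT (fun i => z (Sum.inl (Sum.inr i))) (z (Sum.inr true)) =
      ((Finset.univ.filter fun s : Sym3 r => ∀ k, s k 0 = 0).card : ℤ) := by
    rw [Finset.card_filter]
    push_cast
    apply Finset.sum_congr rfl
    intro s _
    show sgnS s * sgc (M2 z s) _ = _
    split_ifs with hs
    · rw [(hall s).2.2 hs]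
      rcases sgnS_cases s with h | h <;> rw [h] <;> norm_num
    · have : sgc (M2 z s) (z (Sum.inr true)) = 0 := by
        by_contra h
        exact (hall s).2.1 hs (Kdep_of_sgc _ _ h)
      rw [this, mul_zero]
  rw [hA, hB, zero_sub, dvd_neg] at hdvd
  exact good_card hdvd

end Degree4


section TvAssign

variable {r : ℕ} [hrF : Fact r.Prime] {V : Type*} [Fintype V]

/-- An assignment of the points to `r` blocks whose convex hulls share a point. -/
def TvA (x : V → Fin 2 → ℝ) (j : V → ZMod r) : Prop :=
  ∃ p, ∀ l, p ∈ convexHull ℝ (x '' {i | j i = l})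

/-- Homogeneous coordinates. -/
def hat (p : Fin 2 → ℝ) : Fin 3 → ℝ := ![p 0, p 1, 1]

lemma exists_weights (x : V → Fin 2 → ℝ) (S : Set V) (p : Fin 2 → ℝ)
    (hp : p ∈ convexHull ℝ (x '' S)) :
    ∃ w : V → ℝ, (∀ q, 0 ≤ w q) ∧ (∀ q, q ∉ S → w q = 0) ∧ ∑ q, w q = 1 ∧
      ∀ k, ∑ q, w q * x q k = p k := by
  have hsub : convexHull ℝ (x '' S) ⊆ {p | ∃ w : V → ℝ, (∀ q, 0 ≤ w q) ∧
      (∀ q, q ∉ S → w q = 0) ∧ ∑ q, w q = 1 ∧ ∀ k, ∑ q, w q * x q k = p k} := by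
    apply convexHull_min
    · rintro _ ⟨q, hq, rfl⟩
      refine ⟨Pi.single q 1, fun q' => ?_, fun q' hq' => ?_, ?_, fun k => ?_⟩
      · by_cases h : q' = q
        · subst h; simp
        · rw [Pi.single_eq_of_ne h]
      · rw [Pi.single_eq_of_ne]
        rintro rfl; exact hq' hq
      · simp
      · simp [Pi.single_apply]
    · rintro p1 ⟨w1, a1, b1, c1, d1⟩ p2 ⟨w2, a2, b2, c2, d2⟩ s t hs ht hst
      refine ⟨fun q => s * w1 q + t * w2 q, fun q => ?_, fun q hq => ?_, ?_, fun k => ?_⟩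
      · have := a1 q; have := a2 q; positivity
      · simp [b1 q hq, b2 q hq]
      · rw [Finset.sum_add_distrib, ← Finset.mul_sum, ← Finset.mul_sum, c1, c2]; linarith
      · simp only [Pi.add_apply, Pi.smul_apply, smul_eq_mul, ← d1 k, ← d2 k, Finset.mul_sum,
          ← Finset.sum_add_distrib]
        apply Finset.sum_congr rfl
        intro q _; ring
  exact hsub hp

lemma TvA_iff (x : V → Fin 2 → ℝ) (j : V → ZMod r) :
    TvA x j ↔ Kdep (fun q => (WW (hat (x q)) (j q) : Idx r → ℝ)) := by
  have hr0 : (0 : ℝ) < r := by exact_mod_cast hrF.out.pos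
  constructor
  · rintro ⟨p, hp⟩
    choose w h1 h2 h3 h4 using fun l => exists_weights x _ p (hp l)
    have hsupp : ∀ (g : V → ℝ) (m : ZMod r), ∑ q, w (j q) q * g q * (if m = j q then 1 else 0) =
        ∑ q, w m q * g q := by
      intro g m
      apply Finset.sum_congr rfl
      intro q _
      split_ifs with h
      · rw [← h]; ring
      · rw [h2 m q (fun h' => h h'.symm)]; ring
    refine ⟨fun q => w (j q) q / r, ⟨fun q => div_nonneg (h1 _ _) hr0.le, ?_⟩, ?_⟩
    · rw [← Finset.sum_div, div_eq_one_iff_eq hr0.ne']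
      have e1 : ∑ q, w (j q) q = ∑ q, ∑ m : ZMod r, w (j q) q * 1 * (if m = j q then 1 else 0) := by
        apply Finset.sum_congr rfl
        intro q _
        simp
      rw [e1, Finset.sum_comm]
      have e2 : ∀ m : ZMod r, ∑ q, w (j q) q * 1 * (if m = j q then 1 else 0) = 1 := by
        intro m
        have := hsupp (fun _ => 1) m
        rw [this]
        simpa using h3 m
      rw [Finset.sum_congr rfl fun m _ => e2 m]
      simp [ZMod.card]
    · ext ⟨k, m⟩
      have hk : ∀ m : ZMod r, ∑ q, w m q * hat (x q) k = hat p k := by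
        intro m
        fin_cases k
        · simpa [hat] using h4 m 0
        · simpa [hat] using h4 m 1
        · simpa [hat] using h3 m
      simp only [Finset.sum_apply, Pi.smul_apply, smul_eq_mul, WW, Pi.zero_apply]
      have e2 : ∀ q, w (j q) q / r * (hat (x q) k * ((if (m : ZMod r) = j q then 1 else 0) -
          if 0 = j q then 1 else 0)) =
          (w (j q) q * hat (x q) k * (if (m : ZMod r) = j q then 1 else 0) -
           w (j q) q * hat (x q) k * (if (0 : ZMod r) = j q then 1 else 0)) / r := by
        intro q; ring
      simp only [e2]
      rw [← Finset.sum_div, Finset.sum_sub_distrib, hsupp (fun q => hat (x q) k),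
        hsupp (fun q => hat (x q) k), hk, hk]
      simp
  · rintro ⟨a, ⟨ha0, ha1⟩, h⟩
    have hd := dep_WW a (fun q => hat (x q)) j h
    set C : ℝ := ∑ q, a q * (if j q = 0 then 1 else 0) with hC
    have hw : ∀ m, ∑ q, a q * (if j q = m then 1 else 0) = C := by
      intro m
      have := hd 2 m
      simpa [hat, hC] using this
    have hCr : r * C = 1 := by
      have e1 : ∑ m : ZMod r, ∑ q, a q * (if j q = m then 1 else 0) = 1 := by
        rw [Finset.sum_comm]
        refine Eq.trans ?_ ha1
        apply Finset.sum_congr rfl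
        intro q _
        simp
      simp only [hw] at e1
      simpa [ZMod.card] using e1
    refine ⟨fun k => r * ∑ q, a q * (x q k * if j q = 0 then 1 else 0), fun l => ?_⟩
    have hp : (fun k => r * ∑ q, a q * (x q k * if j q = 0 then 1 else 0)) =
        ∑ q ∈ Finset.univ.filter (fun q => j q = l), (r * a q) • x q := by
      ext k
      have e2 : ∑ q, a q * (x q k * if j q = l then 1 else 0) =
          ∑ q, a q * (x q k * if j q = 0 then 1 else 0) := by
        fin_cases k
        · simpa [hat] using hd 0 l
        · simpa [hat] using hd 1 l
      rw [← e2, Finset.sum_apply, Finset.sum_filter, Finset.mul_sum]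
      apply Finset.sum_congr rfl
      intro q _
      split_ifs <;> simp
      ring
    rw [hp]
    apply (convex_convexHull ℝ _).sum_mem
    · intro q _
      exact mul_nonneg hr0.le (ha0 q)
    · rw [Finset.sum_filter, ← hCr, ← hw l, Finset.mul_sum]
      apply Finset.sum_congr rfl
      intro q _
      split_ifs <;> simp
    · intro q hq
      apply subset_convexHull
      exact ⟨q, by simpa using hq, rfl⟩

lemma TvA_stable (x : V → Fin 2 → ℝ) :
    ∀ᶠ x' in nhds x, ∀ j : V → ZMod r, TvA x' j → TvA x j := by
  rw [Filter.eventually_all]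
  intro j
  by_cases h : TvA x j
  · exact Filter.Eventually.of_forall fun _ _ => h
  · have hc : Continuous fun x' : V → Fin 2 → ℝ =>
        (fun q => (WW (hat (x' q)) (j q) : Idx r → ℝ)) := by
      apply continuous_pi
      intro q
      apply continuous_pi
      rintro ⟨k, m⟩
      unfold WW
      apply Continuous.mul _ continuous_const
      fin_cases k
      · exact continuous_apply_apply q 0
      · exact continuous_apply_apply q 1
      · exact continuous_const
    have hcl := (isClosed_Kdep V (Idx r)).isOpen_compl.preimage hc
    have : ∀ᶠ x' in nhds x, ¬ TvA x' j := by
      filter_upwards [hcl.mem_nhds (fun hk => h ((TvA_iff x j).2 hk))] with x' hx' hk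
      exact hx' ((TvA_iff x' j).1 hk)
    filter_upwards [this] with x' hx' hk
    exact absurd hk hx'

lemma Kdep_equiv {Q Q' X : Type*} [Fintype Q] [Fintype Q'] (e : Q ≃ Q') (u : Q' → X → ℝ)
    (h : Kdep (u ∘ e)) : Kdep u := by
  obtain ⟨a, ha, h⟩ := h
  refine ⟨a ∘ e.symm, ⟨fun q => ha.1 _, ?_⟩, ?_⟩
  · rw [← ha.2, ← Equiv.sum_comp e]; simp
  · rw [← h, ← Equiv.sum_comp e]; simp

theorem exists_TvA (hr : Odd r) (c : V → Fin 4)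
    (hc : ∀ j : Fin 4,
      (Finset.univ.filter fun i => c i = j).card = if (j : ℕ) = 3 then 1 else r - 1)
    (x : V → Fin 2 → ℝ) :
    ∃ j : V → ZMod r, TvA x j ∧ ∀ a b, c a = c b → j a = j b → a = b := by
  have hcard : ∀ k : Fin 3, Nonempty ({m : ZMod r // m ≠ 0} ≃ {i // c i = k.castSucc}) := by
    intro k
    apply Fintype.card_eq.1 ?_
    rw [Fintype.card_subtype (fun i => c i = k.castSucc), hc]
    have : ((k.castSucc : Fin 4) : ℕ) ≠ 3 := by
      have := k.2
      simp only [Fin.val_castSucc]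
      omega
    rw [if_neg this, Fintype.card_subtype_compl, ZMod.card]
    simp
  have h3 : ∃ v, c v = 3 := by
    have := hc 3
    rw [if_pos (by rfl), Finset.card_eq_one] at this
    obtain ⟨v, hv⟩ := this
    have : v ∈ Finset.univ.filter fun i => c i = 3 := by rw [hv]; simp
    exact ⟨v, by simpa using this⟩
  have h3u : ∀ v v', c v = 3 → c v' = 3 → v = v' := by
    intro v v' h h'
    have := hc 3
    rw [if_pos (by rfl)] at this
    exact Finset.card_le_one.1 this.le v (by simp [h]) v' (by simp [h'])
  obtain ⟨v3, hv3⟩ := h3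
  set e : ∀ k : Fin 3, {m : ZMod r // m ≠ 0} ≃ {i // c i = k.castSucc} :=
    fun k => (hcard k).some
  set φ : Option (Idx r) → V := fun q => q.elim v3 (fun i => (e i.1 i.2 : V)) with hφ
  have hcφ : ∀ i : Idx r, c (φ (some i)) = i.1.castSucc := fun i => (e i.1 i.2).2
  have hne3 : ∀ k : Fin 3, k.castSucc ≠ (3 : Fin 4) := by decide
  have hφi : Function.Injective φ := by
    intro q q' h
    cases q with
    | none =>
      cases q' with
      | none => rfl
      | some i' =>
        have := hcφ i'
        rw [← h] at this
        exact absurd (this.symm.trans hv3) (hne3 _)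
    | some i =>
      cases q' with
      | none =>
        have := hcφ i
        rw [h] at this
        exact absurd (this.symm.trans hv3) (hne3 _)
      | some i' =>
        have h1 : i.1 = i'.1 := by
          have := (hcφ i).symm.trans ((congrArg c h).trans (hcφ i'))
          exact Fin.castSucc_injective _ this
        obtain ⟨k, m⟩ := i
        obtain ⟨k', m'⟩ := i'
        simp only at h1
        subst h1
        have h2 : (e k m : V) = e k m' := h
        have := (e k).injective (Subtype.ext h2)
        rw [this]
  have hφs : Function.Surjective φ := by
    intro v
    by_cases h : c v = 3
    · exact ⟨none, h3u _ _ hv3 h⟩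
    · have : ∃ k : Fin 3, c v = k.castSucc := by
        generalize c v = t at h
        revert h; revert t; decide
      obtain ⟨k, hk⟩ := this
      refine ⟨some (k, (e k).symm ⟨v, hk⟩), ?_⟩
      simp [hφ]
  obtain ⟨s, hs⟩ := exists_dep hr (fun q => hat (x (φ q)))
  set Φ := Equiv.ofBijective φ ⟨hφi, hφs⟩ with hΦ
  refine ⟨fun v => (Φ.symm v).elim 0 (fun i => s i.1 i.2), ?_, ?_⟩
  · rw [TvA_iff]
    apply Kdep_equiv Φ
    convert hs using 1
    ext1 q
    simp only [Function.comp, Equiv.symm_apply_apply]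
    rfl
  · intro a b hab hj
    obtain ⟨q, rfl⟩ := Φ.surjective a
    obtain ⟨q', rfl⟩ := Φ.surjective b
    simp only [Equiv.symm_apply_apply] at hj
    cases q with
    | none =>
      cases q' with
      | none => rfl
      | some i' =>
        have := hcφ i'
        exact absurd (this.symm.trans (hab.symm.trans hv3)) (hne3 _)
    | some i =>
      cases q' with
      | none =>
        have := hcφ i
        exact absurd (this.symm.trans (hab.trans hv3)) (hne3 _)
      | some i' =>
        have h1 : i.1 = i'.1 := by
          have := (hcφ i).symm.trans (hab.trans (hcφ i'))
          exact Fin.castSucc_injective _ this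
        obtain ⟨k, m⟩ := i
        obtain ⟨k', m'⟩ := i'
        simp only at h1
        subst h1
        have h2 : s k m = s k m' := hj
        have := (s k).injective h2
        rw [Subtype.ext this]

end TvAssign


section Planar

/-- Cross product of `a - p` and `b - p`. -/
def crs (p a b : Fin 2 → ℝ) : ℝ := (a 0 - p 0) * (b 1 - p 1) - (a 1 - p 1) * (b 0 - p 0)

lemma crs_swap (p a b : Fin 2 → ℝ) : crs p b a = - crs p a b := by
  unfold crs; ring

lemma mem_hull_three (p a b c : Fin 2 → ℝ) :
    p ∈ convexHull ℝ ({a, b, c} : Set (Fin 2 → ℝ)) ↔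
      ∃ u v w : ℝ, 0 ≤ u ∧ 0 ≤ v ∧ 0 ≤ w ∧ u + v + w = 1 ∧
        ∀ k, u * a k + v * b k + w * c k = p k := by
  rw [convexHull_insert (by simp), convexHull_pair]
  simp only [segment_eq_image, mem_convexJoin, Set.mem_image, Set.mem_singleton_iff,
    exists_eq_left]
  constructor
  · rintro ⟨y, ⟨s, hs, rfl⟩, t, ht, rfl⟩
    refine ⟨1 - t, t * (1 - s), t * s, by linarith [ht.2], mul_nonneg ht.1 (by linarith [hs.2]),
      mul_nonneg ht.1 hs.1, by ring, fun k => ?_⟩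
    simp
    ring
  · rintro ⟨u, v, w, hu, hv, hw, h1, h⟩
    by_cases hz : v + w = 0
    · refine ⟨b, ⟨0, by simp, by simp⟩, 0, by simp, ?_⟩
      have hv0 : v = 0 := by linarith
      have hw0 : w = 0 := by linarith
      have hu1 : u = 1 := by linarith
      ext k
      simpa [hv0, hw0, hu1] using h k
    · have hpos : 0 < v + w := lt_of_le_of_ne (by linarith) (Ne.symm hz)
      refine ⟨_, ⟨w / (v + w), ⟨by positivity, ?_⟩, rfl⟩, v + w, ⟨by linarith, by linarith⟩, ?_⟩
      · rw [div_le_one hpos]; linarith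
      · ext k
        rw [← h k]
        simp
        field_simp
        have : u = 1 - v - w := by linarith
        subst this
        ring

lemma tri_iff (p a b c : Fin 2 → ℝ) (hab : crs p a b ≠ 0) (hbc : crs p b c ≠ 0)
    (hca : crs p c a ≠ 0) :
    p ∈ convexHull ℝ ({a, b, c} : Set (Fin 2 → ℝ)) ↔
      (0 < crs p a b ∧ 0 < crs p b c ∧ 0 < crs p c a) ∨
      (crs p a b < 0 ∧ crs p b c < 0 ∧ crs p c a < 0) := by
  have hid : ∀ k, crs p b c * (a k - p k) + crs p c a * (b k - p k)
      + crs p a b * (c k - p k) = 0 := by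
    intro k
    fin_cases k <;> (simp [crs]; ring)
  rw [mem_hull_three]
  constructor
  · rintro ⟨u, v, w, hu, hv, hw, h1, h⟩
    have h0 := h 0
    have h1' := h 1
    have hu' : u = 1 - v - w := by linarith
    have e1 : v * crs p a b = w * crs p c a := by
      have : (p 0 - u * a 0 - v * b 0 - w * c 0) * (a 1 - p 1) -
        (p 1 - u * a 1 - v * b 1 - w * c 1) * (a 0 - p 0) = 0 := by
        rw [← h0, ← h1']; ring
      rw [hu'] at this
      unfold crs
      linear_combination this
    have e2 : w * crs p b c = u * crs p a b := by
      have : (p 0 - u * a 0 - v * b 0 - w * c 0) * (b 1 - p 1) -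
        (p 1 - u * a 1 - v * b 1 - w * c 1) * (b 0 - p 0) = 0 := by
        rw [← h0, ← h1']; ring
      have hv' : v = 1 - u - w := by linarith
      rw [hv'] at this
      unfold crs
      linear_combination this
    have hw0 : 0 < w := by
      rcases hw.lt_or_eq with h | h
      · exact h
      · rw [← h] at e1 e2
        have a1 : v = 0 := by simpa [hab] using e1
        have a2 : u = 0 := by simpa [hab] using e2.symm
        linarith
    have hv0 : 0 < v := by
      rcases hv.lt_or_eq with h | h
      · exact h
      · rw [← h] at e1
        have : w = 0 := by simpa [hca] using e1.symm
        linarith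
    have hu0 : 0 < u := by
      rcases hu.lt_or_eq with h | h
      · exact h
      · rw [← h] at e2
        have : w = 0 := by simpa [hbc] using e2
        linarith
    rcases lt_or_gt_of_ne hab with hs | hs
    · right
      refine ⟨hs, ?_, ?_⟩
      · by_contra hc
        push Not at hc
        nlinarith
      · by_contra hc
        push Not at hc
        nlinarith
    · left
      refine ⟨hs, ?_, ?_⟩
      · by_contra hc
        push Not at hc
        nlinarith
      · by_contra hc
        push Not at hc
        nlinarith
  · rintro (⟨h1, h2, h3⟩ | ⟨h1, h2, h3⟩)
    · have hs : 0 < crs p a b + crs p b c + crs p c a := by positivity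
      refine ⟨crs p b c / (crs p a b + crs p b c + crs p c a),
        crs p c a / (crs p a b + crs p b c + crs p c a),
        crs p a b / (crs p a b + crs p b c + crs p c a), by positivity, by positivity,
        by positivity, ?_, fun k => ?_⟩
      · field_simp; ring
      · field_simp
        linear_combination hid k
    · have hs : crs p a b + crs p b c + crs p c a < 0 := by linarith
      refine ⟨crs p b c / (crs p a b + crs p b c + crs p c a),
        crs p c a / (crs p a b + crs p b c + crs p c a),
        crs p a b / (crs p a b + crs p b c + crs p c a),
        div_nonneg_of_nonpos h2.le hs.le, div_nonneg_of_nonpos h3.le hs.le,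
        div_nonneg_of_nonpos h1.le hs.le, ?_, fun k => ?_⟩
      · have := hs.ne
        field_simp; ring
      · have := hs.ne
        field_simp
        linear_combination hid k

/-- The open upper half plane at `p`, with one boundary ray. -/
def upp (p a : Fin 2 → ℝ) : Prop := 0 < a 1 - p 1 ∨ (a 1 - p 1 = 0 ∧ 0 < a 0 - p 0)

lemma upp_trans_aux {x0 x1 y0 y1 z0 z1 : ℝ} (hx : 0 < x1 ∨ (x1 = 0 ∧ 0 < x0))
    (hy : 0 < y1 ∨ (y1 = 0 ∧ 0 < y0)) (hz : 0 < z1 ∨ (z1 = 0 ∧ 0 < z0))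
    (hxy : 0 < x0 * y1 - x1 * y0) (hyz : 0 < y0 * z1 - y1 * z0) : 0 < x0 * z1 - x1 * z0 := by
  have hid : y1 * (x0 * z1 - x1 * z0) = x1 * (y0 * z1 - y1 * z0) + z1 * (x0 * y1 - x1 * y0) := by
    ring
  rcases hy with hy | ⟨hy, hy'⟩
  · have : 0 < y1 * (x0 * z1 - x1 * z0) := by
      rw [hid]
      rcases hx with hx | ⟨hx, hx'⟩
      · rcases hz with hz | ⟨hz, hz'⟩
        · positivity
        · rw [hz]; simp only [zero_mul, add_zero]
          rw [hz] at hyz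
          positivity
      · rcases hz with hz | ⟨hz, hz'⟩
        · rw [hx]; simp only [zero_mul, zero_add]
          rw [hx] at hxy
          simp only [zero_mul] at hxy
          positivity
        · rw [hz] at hyz
          nlinarith
    exact pos_of_mul_pos_right this hy.le
  · rw [hy] at hxy
    rcases hx with hx | ⟨hx, hx'⟩
    · nlinarith
    · rw [hx] at hxy; simp at hxy

lemma not_upp {p a q : Fin 2 → ℝ} (h : ¬ upp p a) (hne : crs p a q ≠ 0) :
    0 < -(a 1 - p 1) ∨ (-(a 1 - p 1) = 0 ∧ 0 < -(a 0 - p 0)) := by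
  unfold upp at h
  push Not at h
  rcases h.1.lt_or_eq with h1 | h1
  · left; linarith
  · right
    refine ⟨by linarith, ?_⟩
    have := h.2 h1
    rcases this.lt_or_eq with h2 | h2
    · linarith
    · exfalso
      apply hne
      unfold crs
      rw [h1, h2]; ring

/-- Whether the segment crosses the distinguished ray. -/
noncomputable def crossing (p a b : Fin 2 → ℝ) : ZMod 2 :=
  if (upp p a ∧ ¬ upp p b ∧ 0 < crs p b a) ∨ (¬ upp p a ∧ upp p b ∧ 0 < crs p a b) then 1 else 0

lemma crossing_parity (p a b c : Fin 2 → ℝ) (hab : crs p a b ≠ 0) (hbc : crs p b c ≠ 0)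
    (hca : crs p c a ≠ 0) :
    (if (0 < crs p a b ∧ 0 < crs p b c ∧ 0 < crs p c a) ∨
      (crs p a b < 0 ∧ crs p b c < 0 ∧ crs p c a < 0) then (1 : ZMod 2) else 0) =
      crossing p a b + crossing p b c + crossing p c a := by
  -- normalised sign vectors
  have H : ∀ x y z : Fin 2 → ℝ, ∀ ex ey ez : ℝ,
      (0 < ex * (x 1 - p 1) ∨ (ex * (x 1 - p 1) = 0 ∧ 0 < ex * (x 0 - p 0))) →
      (0 < ey * (y 1 - p 1) ∨ (ey * (y 1 - p 1) = 0 ∧ 0 < ey * (y 0 - p 0))) →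
      (0 < ez * (z 1 - p 1) ∨ (ez * (z 1 - p 1) = 0 ∧ 0 < ez * (z 0 - p 0))) →
      0 < ex * ey * crs p x y → 0 < ey * ez * crs p y z → 0 < ex * ez * crs p x z := by
    intro x y z ex ey ez hx hy hz hxy hyz
    have := upp_trans_aux hx hy hz (by unfold crs at hxy; nlinarith)
      (by unfold crs at hyz; nlinarith)
    unfold crs
    nlinarith
  have up1 : ∀ x, upp p x → (0 < (1:ℝ) * (x 1 - p 1) ∨
      ((1:ℝ) * (x 1 - p 1) = 0 ∧ 0 < (1:ℝ) * (x 0 - p 0))) := by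
    intro x hx; simpa [upp] using hx
  have dn1 : ∀ x q, crs p x q ≠ 0 → ¬ upp p x → (0 < (-1:ℝ) * (x 1 - p 1) ∨
      ((-1:ℝ) * (x 1 - p 1) = 0 ∧ 0 < (-1:ℝ) * (x 0 - p 0))) := by
    intro x q hq hx
    have := not_upp hx hq
    simpa using this
  have hba := crs_swap p a b
  have hcb := crs_swap p b c
  have hac := crs_swap p c a
  unfold crossing
  rw [hba, hcb, hac]
  have two : (1 : ZMod 2) + 1 = 0 := by decide
  have three : (1 : ZMod 2) + 1 + 1 = 1 := by decide
  have key : ∀ ea eb ec : ℝ,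
      (0 < ea * (a 1 - p 1) ∨ (ea * (a 1 - p 1) = 0 ∧ 0 < ea * (a 0 - p 0))) →
      (0 < eb * (b 1 - p 1) ∨ (eb * (b 1 - p 1) = 0 ∧ 0 < eb * (b 0 - p 0))) →
      (0 < ec * (c 1 - p 1) ∨ (ec * (c 1 - p 1) = 0 ∧ 0 < ec * (c 0 - p 0))) →
      (0 < ea * eb * crs p a b → 0 < eb * ec * crs p b c → 0 < ea * ec * (- crs p c a)) ∧
      (0 < eb * ea * (- crs p a b) → 0 < ec * eb * (- crs p b c) → 0 < ec * ea * (crs p c a)) := by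
    intro ea eb ec h1 h2 h3
    have k1 := H a b c ea eb ec h1 h2 h3
    have k2 := H c b a ec eb ea h3 h2 h1
    rw [hac] at k1
    rw [hcb, hba] at k2
    exact ⟨k1, fun x y => k2 y x⟩
  have fa : ∀ b, crs p a b ≠ 0 → ∃ ea : ℝ, (0 < ea * (a 1 - p 1) ∨ (ea * (a 1 - p 1) = 0 ∧ 0 < ea * (a 0 - p 0)))
    ∧ ((upp p a ∧ ea = 1) ∨ (¬ upp p a ∧ ea = -1)) := by
    intro b hb
    by_cases h : upp p a
    · exact ⟨1, up1 _ h, Or.inl ⟨h, rfl⟩⟩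
    · exact ⟨-1, dn1 _ _ hb h, Or.inr ⟨h, rfl⟩⟩
  have fb : ∃ ea : ℝ, (0 < ea * (b 1 - p 1) ∨ (ea * (b 1 - p 1) = 0 ∧ 0 < ea * (b 0 - p 0)))
    ∧ ((upp p b ∧ ea = 1) ∨ (¬ upp p b ∧ ea = -1)) := by
    by_cases h : upp p b
    · exact ⟨1, up1 _ h, Or.inl ⟨h, rfl⟩⟩
    · exact ⟨-1, dn1 _ _ hbc h, Or.inr ⟨h, rfl⟩⟩
  have fc : ∃ ea : ℝ, (0 < ea * (c 1 - p 1) ∨ (ea * (c 1 - p 1) = 0 ∧ 0 < ea * (c 0 - p 0)))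
    ∧ ((upp p c ∧ ea = 1) ∨ (¬ upp p c ∧ ea = -1)) := by
    by_cases h : upp p c
    · exact ⟨1, up1 _ h, Or.inl ⟨h, rfl⟩⟩
    · exact ⟨-1, dn1 _ _ hca h, Or.inr ⟨h, rfl⟩⟩
  obtain ⟨ea, ha, ha'⟩ := fa b hab
  obtain ⟨eb, hb, hb'⟩ := fb
  obtain ⟨ec, hc, hc'⟩ := fc
  have k := key ea eb ec ha hb hc
  clear key H up1 dn1 fa ha hb hc hba hcb hac
  generalize crs p a b = A at *
  generalize crs p b c = B at *
  generalize crs p c a = C at *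
  rcases ha' with ⟨h1, rfl⟩ | ⟨h1, rfl⟩ <;> rcases hb' with ⟨h2, rfl⟩ | ⟨h2, rfl⟩ <;>
    rcases hc' with ⟨h3, rfl⟩ | ⟨h3, rfl⟩ <;>
  rcases lt_or_gt_of_ne hab with sA | sA <;> rcases lt_or_gt_of_ne hbc with sB | sB <;>
    rcases lt_or_gt_of_ne hca with sC | sC <;>
  simp [h1, h2, h3, sA, sB, sC, sA.le, sB.le, sC.le, sA.not_gt, sB.not_gt, sC.not_gt, two] at k ⊢

end Planar


section GenericPoints

variable {V : Type*} [Fintype V]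

/-- Determinant testing concurrency of the lines `ab`, `cd`, `ef`. -/
def conc (a b c d e f : Fin 2 → ℝ) : ℝ :=
  (a 1 - b 1) * ((d 0 - c 0) * (e 0 * f 1 - e 1 * f 0) - (c 0 * d 1 - c 1 * d 0) * (f 0 - e 0))
  - (b 0 - a 0) * ((c 1 - d 1) * (e 0 * f 1 - e 1 * f 0) - (c 0 * d 1 - c 1 * d 0) * (e 1 - f 1))
  + (a 0 * b 1 - a 1 * b 0) * ((c 1 - d 1) * (f 0 - e 0) - (d 0 - c 0) * (e 1 - f 1))

lemma conc_eq_zero (p a b c d e f : Fin 2 → ℝ) (h1 : crs p a b = 0) (h2 : crs p c d = 0)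
    (h3 : crs p e f = 0) : conc a b c d e f = 0 := by
  unfold crs at h1 h2 h3
  unfold conc
  linear_combination ((c 1 - d 1) * (f 0 - e 0) - (d 0 - c 0) * (e 1 - f 1)) * h1
    - ((a 1 - b 1) * (f 0 - e 0) - (b 0 - a 0) * (e 1 - f 1)) * h2
    + ((a 1 - b 1) * (d 0 - c 0) - (b 0 - a 0) * (c 1 - d 1)) * h3

/-- The genericity of a planar configuration that we use. -/
def Gp (x : V → Fin 2 → ℝ) : Prop :=
  (∀ t : Fin 3 → V, Function.Injective t → crs (x (t 0)) (x (t 1)) (x (t 2)) ≠ 0) ∧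
  (∀ t : Fin 6 → V, Function.Injective t →
    conc (x (t 0)) (x (t 1)) (x (t 2)) (x (t 3)) (x (t 4)) (x (t 5)) ≠ 0)

lemma dense_Gp : Dense {x : V → Fin 2 → ℝ | Gp x} := by
  have hset : {x : V → Fin 2 → ℝ | Gp x} = {x | ∀ a : {t : Fin 3 → V // Function.Injective t} ⊕
      {t : Fin 6 → V // Function.Injective t},
      (Sum.elim (fun t x => crs (x (t.1 0)) (x (t.1 1)) (x (t.1 2)))
        (fun t x => conc (x (t.1 0)) (x (t.1 1)) (x (t.1 2)) (x (t.1 3)) (x (t.1 4)) (x (t.1 5))) a :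
        (V → Fin 2 → ℝ) → ℝ) x ≠ 0} := by
    ext x
    constructor
    · rintro ⟨h1, h2⟩ (t | t)
      · exact h1 t.1 t.2
      · exact h2 t.1 t.2
    · intro h
      exact ⟨fun t ht => h (Sum.inl ⟨t, ht⟩), fun t ht => h (Sum.inr ⟨t, ht⟩)⟩
  rw [hset]
  have hco : ∀ (v : V) (k : Fin 2),
      AnalyticOnNhd ℝ (fun x : V → Fin 2 → ℝ => x v k) Set.univ := by
    intro v k
    exact ((ContinuousLinearMap.proj (R := ℝ) (φ := fun _ : Fin 2 => ℝ) k).comp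
      (ContinuousLinearMap.proj (R := ℝ) (φ := fun _ : V => Fin 2 → ℝ) v)).analyticOnNhd _
  have hwit : ∀ (n : ℕ) (t : Fin n → V) (_ : Function.Injective t) (y : Fin n → Fin 2 → ℝ),
      ∃ x : V → Fin 2 → ℝ, ∀ i, x (t i) = y i := by
    intro n t ht y
    exact ⟨Function.extend t y 0, fun i => ht.extend_apply _ _ _⟩
  apply dense_ne
  · rintro (t | t)
    · simp only [Sum.elim_inl]
      unfold crs
      exact (((hco _ _).sub (hco _ _)).mul ((hco _ _).sub (hco _ _))).sub
        (((hco _ _).sub (hco _ _)).mul ((hco _ _).sub (hco _ _)))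
    · simp only [Sum.elim_inr]
      unfold conc
      have dd : ∀ (v w : V) (k : Fin 2),
        AnalyticOnNhd ℝ (fun x : V → Fin 2 → ℝ => x v k - x w k) Set.univ :=
        fun v w k => (hco _ _).sub (hco _ _)
      have mm : ∀ (v w : V),
        AnalyticOnNhd ℝ (fun x : V → Fin 2 → ℝ => x v 0 * x w 1 - x v 1 * x w 0) Set.univ :=
        fun v w => ((hco _ _).mul (hco _ _)).sub ((hco _ _).mul (hco _ _))
      exact (((dd _ _ _).mul (((dd _ _ _).mul (mm _ _)).sub ((mm _ _).mul (dd _ _ _)))).sub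
        ((dd _ _ _).mul (((dd _ _ _).mul (mm _ _)).sub ((mm _ _).mul (dd _ _ _))))).add
        ((mm _ _).mul (((dd _ _ _).mul (dd _ _ _)).sub ((dd _ _ _).mul (dd _ _ _))))
  · rintro (t | t)
    · obtain ⟨x, hx⟩ := hwit 3 t.1 t.2 ![![0, 0], ![1, 0], ![0, 1]]
      refine ⟨x, ?_⟩
      simp only [Sum.elim_inl, hx]
      simp [crs]
    · obtain ⟨x, hx⟩ := hwit 6 t.1 t.2 ![![0, 0], ![1, 0], ![0, 1], ![0, 2], ![2, -1], ![3, -2]]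
      refine ⟨x, ?_⟩
      simp only [Sum.elim_inr, hx]
      simp [conc]
      norm_num

end GenericPoints


section Blocks

variable {r : ℕ} [hrF : Fact r.Prime] {V : Type*} [Fintype V]

lemma crs_of_mem_pair (p a b : Fin 2 → ℝ) (h : p ∈ convexHull ℝ ({a, b} : Set (Fin 2 → ℝ))) :
    crs p a b = 0 := by
  have h' : p ∈ convexHull ℝ ({a, b, b} : Set (Fin 2 → ℝ)) := by simpa using h
  rw [mem_hull_three] at h'
  obtain ⟨u, v, w, _, _, _, h1, h2⟩ := h'
  have e0 := h2 0
  have e1 := h2 1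
  have hu : u = 1 - v - w := by linarith
  subst hu
  unfold crs
  rw [← e0, ← e1]
  ring

lemma Gp.three {x : V → Fin 2 → ℝ} (hx : Gp x) {a b c : V} (hab : a ≠ b) (hac : a ≠ c)
    (hbc : b ≠ c) : crs (x a) (x b) (x c) ≠ 0 := by
  have := hx.1 ![a, b, c] (by
    intro i j h
    fin_cases i <;> fin_cases j <;> simp_all)
  simpa using this

lemma Gp.six {x : V → Fin 2 → ℝ} (hx : Gp x) {a b c d e f : V}
    (h : Function.Injective ![a, b, c, d, e, f]) (p : Fin 2 → ℝ)
    (h1 : crs p (x a) (x b) = 0) (h2 : crs p (x c) (x d) = 0) : crs p (x e) (x f) ≠ 0 := by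
  intro h3
  exact hx.2 ![a, b, c, d, e, f] h (conc_eq_zero p _ _ _ _ _ _ h1 h2 h3)

lemma inj_six {j : V → ZMod r} {a b c d e f : V} (hab : a ≠ b) (hcd : c ≠ d) (hef : e ≠ f)
    (jab : j a = j b) (jcd : j c = j d) (h1 : j a ≠ j c) (h2 : j a ≠ j e) (h3 : j a ≠ j f)
    (h4 : j c ≠ j e) (h5 : j c ≠ j f) : Function.Injective ![a, b, c, d, e, f] := by
  have n1 : a ≠ c := fun h => h1 (h ▸ rfl)
  have n2 : a ≠ d := fun h => h1 (by rw [jcd, h])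
  have n3 : a ≠ e := fun h => h2 (h ▸ rfl)
  have n4 : a ≠ f := fun h => h3 (h ▸ rfl)
  have n5 : b ≠ c := fun h => h1 (by rw [jab, h])
  have n6 : b ≠ d := fun h => h1 (by rw [jab, h, jcd])
  have n7 : b ≠ e := fun h => h2 (by rw [jab, h])
  have n8 : b ≠ f := fun h => h3 (by rw [jab, h])
  have n9 : c ≠ e := fun h => h4 (by rw [h])
  have n10 : c ≠ f := fun h => h5 (by rw [h])
  have n11 : d ≠ e := fun h => h4 (by rw [jcd, h])
  have n12 : d ≠ f := fun h => h5 (by rw [jcd, h])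
  intro i i' hii
  fin_cases i <;> fin_cases i' <;> simp_all

/-- Structure of the blocks of a generic Tverberg assignment. -/
lemma block_structure (hr : 8 ≤ r) (hV : Fintype.card V = 3 * (r - 1) + 1)
    (x : V → Fin 2 → ℝ) (hx : Gp x) (j : V → ZMod r) (p : Fin 2 → ℝ)
    (hp : ∀ l, p ∈ convexHull ℝ (x '' {i | j i = l})) :
    ∃ Sm : Finset (ZMod r), Sm.card ≤ 2 ∧
      (∀ l, l ∉ Sm → (Finset.univ.filter fun i => j i = l).card = 3) ∧
      ∀ u v, u ≠ v → j u ∉ Sm → j v ∉ Sm → crs p (x u) (x v) ≠ 0 := by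
  set n : ZMod r → ℕ := fun l => (Finset.univ.filter fun i => j i = l).card with hn
  have hsum : ∑ l, n l = 3 * (r - 1) + 1 := by
    rw [← hV, ← Finset.card_univ]
    exact (Finset.card_eq_sum_card_fiberwise (fun i _ => Finset.mem_univ (j i))).symm
  have hpos : ∀ l, 1 ≤ n l := by
    intro l
    rw [Nat.one_le_iff_ne_zero, hn]
    intro h0
    have h1 : {i | j i = l} = (∅ : Set V) := by
      rw [Finset.card_eq_zero] at h0
      ext i
      have : i ∉ Finset.univ.filter fun i => j i = l := by rw [h0]; simp
      simpa using this
    have := hp l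
    rw [h1] at this
    simp at this
  have hone : ∀ l, n l = 1 → ∃ a, j a = l ∧ p = x a := by
    intro l h
    obtain ⟨a, ha⟩ := Finset.card_eq_one.1 h
    have h1 : {i | j i = l} = ({a} : Set V) := by
      ext i
      have : i ∈ (Finset.univ.filter fun i => j i = l) ↔ i ∈ ({a} : Finset V) := by rw [ha]
      simpa using this
    have h2 := hp l
    rw [h1] at h2
    have h3 : a ∈ {i | j i = l} := by rw [h1]; simp
    exact ⟨a, h3, by simpa using h2⟩
  have htwo : ∀ l, n l = 2 → ∃ a b, a ≠ b ∧ j a = l ∧ j b = l ∧ crs p (x a) (x b) = 0 := by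
    intro l h
    obtain ⟨a, b, hab, hs⟩ := Finset.card_eq_two.1 h
    have h1 : {i | j i = l} = ({a, b} : Set V) := by
      ext i
      have : i ∈ (Finset.univ.filter fun i => j i = l) ↔ i ∈ ({a, b} : Finset V) := by rw [hs]
      simpa using this
    have h2 := hp l
    rw [h1, Set.image_pair] at h2
    have h3 : a ∈ {i | j i = l} := by rw [h1]; simp
    have h4 : b ∈ {i | j i = l} := by rw [h1]; simp
    exact ⟨a, b, hab, h3, h4, crs_of_mem_pair _ _ _ h2⟩
  have hcardL : (Finset.univ : Finset (ZMod r)).card = r := by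
    rw [Finset.card_univ, ZMod.card]
  by_cases hA : ∃ l0, n l0 = 1
  · obtain ⟨l0, hl0⟩ := hA
    obtain ⟨a, hja, hpa⟩ := hone l0 hl0
    have hge : ∀ l ∈ Finset.univ.erase l0, 3 ≤ n l := by
      intro l hl
      have hl' : l ≠ l0 := Finset.ne_of_mem_erase hl
      by_contra hcon
      have := hpos l
      have h12 : n l = 1 ∨ n l = 2 := by omega
      rcases h12 with h | h
      · obtain ⟨b, hjb, hpb⟩ := hone l h
        have hab : a ≠ b := by rintro rfl; exact hl' (hjb.symm.trans hja)
        obtain ⟨c, hc⟩ : ∃ c, c ∉ ({a, b} : Finset V) := by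
          by_contra hall
          push Not at hall
          have h1 := Finset.card_le_card (fun c _ => hall c : Finset.univ ⊆ ({a, b} : Finset V))
          rw [Finset.card_univ, hV] at h1
          have := Finset.card_le_two (a := a) (b := b)
          omega
        simp only [Finset.mem_insert, Finset.mem_singleton, not_or] at hc
        apply hx.three hab (Ne.symm hc.1) (Ne.symm hc.2)
        rw [← hpb, hpa]
        simp [crs]
      · obtain ⟨b, c, hbc, hjb, hjc, h0⟩ := htwo l h
        have hab : a ≠ b := by rintro rfl; exact hl' (hjb.symm.trans hja)
        have hac : a ≠ c := by rintro rfl; exact hl' (hjc.symm.trans hja)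
        rw [hpa] at h0
        exact hx.three hab hac hbc h0
    have hs2 : ∑ l ∈ Finset.univ.erase l0, n l = ∑ l ∈ Finset.univ.erase l0, 3 := by
      rw [Finset.sum_const, Finset.card_erase_of_mem (Finset.mem_univ _), hcardL, smul_eq_mul]
      have := Finset.add_sum_erase Finset.univ n (Finset.mem_univ l0)
      omega
    have heq := (Finset.sum_eq_sum_iff_of_le hge).1 hs2.symm
    refine ⟨{l0}, by simp, fun l hl => ?_, fun u v huv hu hv => ?_⟩
    · exact (heq l (Finset.mem_erase.2 ⟨by simpa using hl, Finset.mem_univ _⟩)).symm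
    · rw [hpa]
      apply hx.three _ _ huv
      · rintro rfl; exact hu (by simp [hja])
      · rintro rfl; exact hv (by simp [hja])
  · push Not at hA
    have hge2 : ∀ l, 2 ≤ n l := fun l => by have := hpos l; have := hA l; omega
    set Sm : Finset (ZMod r) := Finset.univ.filter fun l => n l = 2 with hSm
    have hle : Sm.card ≤ 2 := by
      by_contra hcon
      push Not at hcon
      obtain ⟨l1, h1, l2, h2, l3, h3, h12, h13, h23⟩ := Finset.two_lt_card.1 hcon
      simp only [hSm, Finset.mem_filter, Finset.mem_univ, true_and] at h1 h2 h3
      obtain ⟨a, b, hab, hja, hjb, e1⟩ := htwo l1 h1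
      obtain ⟨c, d, hcd, hjc, hjd, e2⟩ := htwo l2 h2
      obtain ⟨e, f, hef, hje, hjf, e3⟩ := htwo l3 h3
      refine hx.six (inj_six (j := j) hab hcd hef ?_ ?_ ?_ ?_ ?_ ?_ ?_) p e1 e2 e3 <;>
        simp_all
    have hge3 : ∀ l ∈ Finset.univ \ Sm, 3 ≤ n l := by
      intro l hl
      simp only [hSm, Finset.mem_sdiff, Finset.mem_filter, Finset.mem_univ, true_and] at hl
      have := hge2 l
      omega
    have hs1 : ∑ l ∈ Finset.univ \ Sm, n l + ∑ l ∈ Sm, n l = 3 * (r - 1) + 1 := by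
      rw [← hsum]
      exact Finset.sum_sdiff (Finset.subset_univ _)
    have hs2 : ∑ l ∈ Sm, n l = 2 * Sm.card := by
      rw [Finset.sum_congr rfl (fun l hl => (Finset.mem_filter.1 hl).2), Finset.sum_const,
        smul_eq_mul, mul_comm]
    have hcs : (Finset.univ \ Sm).card + Sm.card = r := by
      refine Eq.trans ?_ hcardL
      exact Finset.card_sdiff_add_card_eq_card (Finset.subset_univ _)
    have hlow : ∑ l ∈ Finset.univ \ Sm, 3 ≤ ∑ l ∈ Finset.univ \ Sm, n l :=
      Finset.sum_le_sum hge3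
    rw [Finset.sum_const, smul_eq_mul] at hlow
    have hc2 : Sm.card = 2 := by omega
    have hs3 : ∑ l ∈ Finset.univ \ Sm, 3 = ∑ l ∈ Finset.univ \ Sm, n l := by
      rw [Finset.sum_const, smul_eq_mul]
      omega
    have heq := (Finset.sum_eq_sum_iff_of_le hge3).1 hs3
    refine ⟨Sm, hle, fun l hl => ?_, fun u v huv hu hv => ?_⟩
    · exact (heq l (by simp [hl])).symm
    · obtain ⟨l1, l2, h12, hs⟩ := Finset.card_eq_two.1 hc2
      have m1 : l1 ∈ Sm := by rw [hs]; simp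
      have m2 : l2 ∈ Sm := by rw [hs]; simp
      obtain ⟨a, b, hab, hja, hjb, e1⟩ := htwo l1 (Finset.mem_filter.1 m1).2
      obtain ⟨c, d, hcd, hjc, hjd, e2⟩ := htwo l2 (Finset.mem_filter.1 m2).2
      refine hx.six (inj_six (j := j) hab hcd huv (hja.trans hjb.symm) (hjc.trans hjd.symm)
        ?_ ?_ ?_ ?_ ?_) p e1 e2
      · rw [hja, hjc]; exact h12
      · rw [hja]; rintro rfl; exact hu m1
      · rw [hja]; rintro rfl; exact hv m1
      · rw [hjc]; rintro rfl; exact hu m2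
      · rw [hjc]; rintro rfl; exact hv m2

lemma parityDec_hull {ι : Type*} (p : Fin 2 → ℝ) (R G B : ι → Fin 2 → ℝ)
    (h1 : ∀ i j, crs p (R i) (G j) ≠ 0) (h2 : ∀ i j, crs p (G i) (B j) ≠ 0)
    (h3 : ∀ i j, crs p (B i) (R j) ≠ 0) :
    ParityDec (fun i j l => p ∈ convexHull ℝ ({R i, G j, B l} : Set (Fin 2 → ℝ))) := by
  refine ⟨fun i j => crossing p (R i) (G j), fun i j => crossing p (G i) (B j),
    fun i j => crossing p (B i) (R j), fun i j l => ?_⟩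
  rw [← crossing_parity p (R i) (G j) (B l) (h1 _ _) (h2 _ _) (h3 _ _)]
  simp only [tri_iff p (R i) (G j) (B l) (h1 _ _) (h2 _ _) (h3 _ _)]

lemma bd_ge {k r : ℕ} (hr : 8 ≤ r) (hk : r - 2 ≤ k) : 8 * 3 ^ (r - 8) ≤ bd k := by
  unfold bd
  rw [if_neg (by omega)]
  split_ifs with h
  · have h1 : k = 6 := by omega
    have h2 : r = 8 := by omega
    subst h1 h2
    norm_num
  · apply Nat.mul_le_mul_left
    apply Nat.pow_le_pow_right (by norm_num)
    omega

end Blocks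


section Assembly

variable {r : ℕ} [hrF : Fact r.Prime] {V : Type*} [Fintype V]

lemma exists_recolor (c : V → Fin 4) (j : V → ZMod r)
    (hci : ∀ a b, c a = c b → j a = j b → a = b) (Sm : Finset (ZMod r))
    (h3 : ∀ l, l ∉ Sm → (Finset.univ.filter fun i => j i = l).card = 3)
    (z : V) (hz : ∀ v, c v = 3 ↔ v = z) :
    ∃ c' : V → Fin 3, (∀ a b, c a = c b → c' a = c' b) ∧
      ∀ a b, j a ∉ Sm → j a = j b → c' a = c' b → a = b := by
  have hq : ∃ q : Fin 3, j z ∉ Sm → ∀ v, v ≠ z → j v = j z → c v ≠ q.castSucc := by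
    by_cases hzS : j z ∈ Sm
    · exact ⟨0, fun h => absurd hzS h⟩
    · by_contra hcon
      push Not at hcon
      have hsub : (Finset.univ : Finset (Fin 3)).image Fin.castSucc ⊆
          ((Finset.univ.filter fun i => j i = j z).erase z).image c := by
        intro y hy
        obtain ⟨q, -, rfl⟩ := Finset.mem_image.1 hy
        obtain ⟨-, v, hvz, hv, hcv⟩ := hcon q
        exact Finset.mem_image.2 ⟨v, by simp [hvz, hv], hcv⟩
      have h1 := Finset.card_le_card hsub
      rw [Finset.card_image_of_injective _ (Fin.castSucc_injective 3), Finset.card_univ,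
        Fintype.card_fin] at h1
      have h2 := Finset.card_image_le (s := (Finset.univ.filter fun i => j i = j z).erase z) (f := c)
      rw [Finset.card_erase_of_mem (by simp), h3 _ hzS] at h2
      omega
  obtain ⟨q, hq⟩ := hq
  have hlt : ∀ v, c v ≠ 3 → (c v).val < 3 := by
    intro v hv
    have h1 := (c v).isLt
    have h2 : (c v).val ≠ 3 := fun h => hv (Fin.ext h)
    omega
  have hlt' : ∀ v, v ≠ z → (c v).val < 3 := fun v hv => hlt v (fun h => hv ((hz v).1 h))
  refine ⟨fun v => if h : v = z then q else ⟨(c v).val, hlt' v h⟩, fun a b hab => ?_,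
    fun a b ha hjab hab => ?_⟩
  · have hiff : a = z ↔ b = z := by rw [← hz a, ← hz b, hab]
    by_cases haz : a = z
    · have hbz := hiff.1 haz
      simp [haz, hbz]
    · have hbz : ¬ b = z := fun h => haz (hiff.2 h)
      simp [haz, hbz, hab]
  · by_cases haz : a = z <;> by_cases hbz : b = z
    · rw [haz, hbz]
    · exfalso
      simp only [haz, hbz, dif_pos, dif_neg, not_false_iff] at hab
      subst haz
      refine hq ha b hbz hjab.symm (Fin.ext ?_)
      rw [hab]
      rfl
    · exfalso
      simp only [haz, hbz, dif_pos, dif_neg, not_false_iff] at hab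
      subst hbz
      refine hq (hjab ▸ ha) a haz hjab (Fin.ext ?_)
      rw [← hab]
      rfl
    · simp only [haz, hbz, dif_neg, not_false_iff, Fin.mk.injEq] at hab
      exact hci a b (Fin.ext hab) hjab

theorem many_assign (hr : 8 ≤ r) (hV : Fintype.card V = 3 * (r - 1) + 1) (c : V → Fin 4)
    (hc : ∀ j : Fin 4,
      (Finset.univ.filter fun i => c i = j).card = if (j : ℕ) = 3 then 1 else r - 1)
    (x : V → Fin 2 → ℝ) :
    ∃ F : Finset (V → ZMod r), 8 * 3 ^ (r - 8) ≤ F.card ∧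
      (∀ j ∈ F, TvA x j ∧ ∀ a b, c a = c b → j a = j b → a = b) ∧
      ∀ j ∈ F, ∀ j' ∈ F, (∀ a b, j a = j b ↔ j' a = j' b) → j = j' := by
  have hodd : Odd r := hrF.out.odd_of_ne_two (by omega)
  obtain ⟨x', hx', hst⟩ : ∃ x' : V → Fin 2 → ℝ, Gp x' ∧ ∀ j : V → ZMod r, TvA x' j → TvA x j := by
    obtain ⟨U, hU, hUo, hxU⟩ := eventually_nhds_iff.1 (TvA_stable (r := r) x)
    obtain ⟨y, hyU, hy⟩ := (dense_Gp (V := V)).inter_open_nonempty U hUo ⟨x, hxU⟩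
    exact ⟨y, hy, hU y hyU⟩
  obtain ⟨j0, ⟨p, hp⟩, hj0⟩ := exists_TvA hodd c hc x'
  obtain ⟨Sm, hSm2, hSm3, hcrs⟩ := block_structure hr hV x' hx' j0 p hp
  obtain ⟨z, hz⟩ : ∃ z, ∀ v, c v = 3 ↔ v = z := by
    have h := hc 3
    rw [if_pos (by rfl)] at h
    obtain ⟨z, hz⟩ := Finset.card_eq_one.1 h
    refine ⟨z, fun v => ?_⟩
    have : v ∈ (Finset.univ.filter fun i => c i = 3) ↔ v ∈ ({z} : Finset V) := by rw [hz]
    simpa using this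
  obtain ⟨c', hcc, hc'⟩ := exists_recolor c j0 hj0 Sm hSm3 z hz
  have hex : ∀ (k : Fin 3) (l : {l : ZMod r // l ∉ Sm}), ∃ v, j0 v = l ∧ c' v = k := by
    intro k l
    have hinj : Set.InjOn c' (Finset.univ.filter fun i => j0 i = l.1 : Finset V) := by
      intro a ha b hb hab
      simp only [Finset.coe_filter, Finset.mem_univ, true_and, Set.mem_ofPred_eq] at ha hb
      exact hc' a b (ha ▸ l.2) (ha.trans hb.symm) hab
    have hcard := Finset.card_image_of_injOn hinj
    rw [hSm3 _ l.2] at hcard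
    have huniv : (Finset.univ.filter fun i => j0 i = l.1).image c' = Finset.univ := by
      apply Finset.eq_univ_of_card
      rw [hcard]
      simp
    have hk : k ∈ (Finset.univ.filter fun i => j0 i = l.1).image c' := by rw [huniv]; simp
    obtain ⟨v, hv, hvk⟩ := Finset.mem_image.1 hk
    exact ⟨v, by simpa using hv, hvk⟩
  choose P hPj hPc using hex
  have hPuniq : ∀ v (l : {l : ZMod r // l ∉ Sm}), j0 v = l → v = P (c' v) l := by
    intro v l hv
    exact hc' _ _ (hv ▸ l.2) (by rw [hv, hPj]) (by rw [hPc])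
  have hPne : ∀ k k' l l', k ≠ k' → P k l ≠ P k' l' := by
    intro k k' l l' hk h
    apply hk
    rw [← hPc k l, h, hPc]
  have hPcrs : ∀ k k' l l', k ≠ k' → crs p (x' (P k l)) (x' (P k' l')) ≠ 0 := by
    intro k k' l l' hk
    apply hcrs _ _ (hPne k k' l l' hk)
    · rw [hPj]; exact l.2
    · rw [hPj]; exact l'.2
  set I : {l : ZMod r // l ∉ Sm} → {l : ZMod r // l ∉ Sm} → {l : ZMod r // l ∉ Sm} → Prop :=
    fun i j l => p ∈ convexHull ℝ ({x' (P 0 i), x' (P 1 j), x' (P 2 l)} : Set (Fin 2 → ℝ)) with hI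
  have hpar : ParityDec I :=
    parityDec_hull p (fun l => x' (P 0 l)) (fun l => x' (P 1 l)) (fun l => x' (P 2 l))
      (fun i j => hPcrs _ _ _ _ (by decide)) (fun i j => hPcrs _ _ _ _ (by decide))
      (fun i j => hPcrs _ _ _ _ (by decide))
  have hdiag : ∀ i ∈ (Finset.univ : Finset {l : ZMod r // l ∉ Sm}), I i i i := by
    intro l _
    rw [hI]
    refine convexHull_mono ?_ (hp l.1)
    rintro _ ⟨v, hv, rfl⟩
    have hv' := hPuniq v l hv
    rw [hv']
    generalize c' v = k
    fin_cases k <;> simp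
  have hcardLb : r - 2 ≤ (Finset.univ : Finset {l : ZMod r // l ∉ Sm}).card := by
    rw [Finset.card_univ, Fintype.card_subtype_compl, ZMod.card, Fintype.card_coe]
    omega
  have hbd := (bd_ge hr hcardLb).trans (bd_le_Sol _ I hpar Finset.univ rfl hdiag)
  set τ : Equiv.Perm {l : ZMod r // l ∉ Sm} × Equiv.Perm {l : ZMod r // l ∉ Sm} → Fin 3 →
    Equiv.Perm {l : ZMod r // l ∉ Sm} := fun q => ![1, q.1, q.2] with hτ
  set J : Equiv.Perm {l : ZMod r // l ∉ Sm} × Equiv.Perm {l : ZMod r // l ∉ Sm} → V → ZMod r :=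
    fun q v => if h : j0 v ∉ Sm then ((τ q (c' v)).symm ⟨j0 v, h⟩ : ZMod r) else j0 v with hJ
  have hJP : ∀ q k l, J q (P k l) = (τ q k).symm l := by
    intro q k l
    have h : j0 (P k l) ∉ Sm := by rw [hPj]; exact l.2
    rw [hJ]
    simp only [dif_pos h, hPc]
    congr 2
    exact Subtype.ext (hPj k l)
  have hτ0 : ∀ q l, (τ q 0).symm l = l := fun _ _ => rfl
  have hJS : ∀ q v, j0 v ∈ Sm → J q v = j0 v := by
    intro q v hv
    rw [hJ]
    simp [hv]
  have hPall : ∀ v, j0 v ∉ Sm → ∃ k l, v = P k l := fun v hv => ⟨_, ⟨j0 v, hv⟩, hPuniq v _ rfl⟩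
  have hrec : ∀ q q', (∀ a b, J q a = J q b ↔ J q' a = J q' b) → q = q' := by
    intro q q' h
    have key : ∀ k, τ q k = τ q' k := by
      intro k
      apply Equiv.symm_bijective.injective
      ext l
      have h1 := (h (P k l) (P 0 ((τ q k).symm l))).1 (by rw [hJP, hJP, hτ0])
      rw [hJP, hJP, hτ0] at h1
      exact h1.symm
    exact Prod.ext (by simpa [hτ] using key 1) (by simpa [hτ] using key 2)
  refine ⟨(Sol I Finset.univ).image J, ?_, ?_, ?_⟩
  · rw [Finset.card_image_of_injective]
    · exact hbd
    · intro q q' h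
      exact hrec q q' (fun a b => by rw [h])
  · intro j hj
    obtain ⟨q, hq, rfl⟩ := Finset.mem_image.1 hj
    rw [mem_Sol] at hq
    refine ⟨hst _ ⟨p, fun l => ?_⟩, fun a b hab hJab => ?_⟩
    · by_cases hl : l ∈ Sm
      · refine convexHull_mono (Set.image_mono ?_) (hp l)
        intro v hv
        have hv' : j0 v = l := hv
        change J q v = l
        rw [hJS q v (hv' ▸ hl), hv']
      · have h1 : I ⟨l, hl⟩ (q.1 ⟨l, hl⟩) (q.2 ⟨l, hl⟩) := hq.2 _ (Finset.mem_univ _)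
        rw [hI] at h1
        refine convexHull_mono ?_ h1
        rintro _ (rfl | rfl | rfl)
        · exact ⟨_, by change J q _ = l; rw [hJP, hτ0], rfl⟩
        · exact ⟨_, by change J q _ = l; rw [hJP]; simp [hτ], rfl⟩
        · exact ⟨_, by change J q _ = l; rw [hJP]; simp [hτ], rfl⟩
    · by_cases ha : j0 a ∈ Sm <;> by_cases hb : j0 b ∈ Sm
      · rw [hJS _ _ ha, hJS _ _ hb] at hJab
        exact hj0 a b hab hJab
      · exfalso
        obtain ⟨k, l, rfl⟩ := hPall b hb
        rw [hJS _ _ ha, hJP] at hJab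
        exact ((τ q k).symm l).2 (hJab ▸ ha)
      · exfalso
        obtain ⟨k, l, rfl⟩ := hPall a ha
        rw [hJS _ _ hb, hJP] at hJab
        exact ((τ q k).symm l).2 (hJab ▸ hb)
      · obtain ⟨k, l, rfl⟩ := hPall a ha
        obtain ⟨k', l', rfl⟩ := hPall b hb
        have hk := hcc _ _ hab
        rw [hPc, hPc] at hk
        subst hk
        rw [hJP, hJP] at hJab
        have := (τ q k).symm.injective (Subtype.ext hJab)
        rw [this]
  · intro j hj j' hj' h
    obtain ⟨q, hq, rfl⟩ := Finset.mem_image.1 hj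
    obtain ⟨q', hq', rfl⟩ := Finset.mem_image.1 hj'
    rw [hrec q q' h]

end Assembly

/-- For `d = 2` and a prime `r ≥ 8`, with `N = 3(r-1)`: for any affine map `f` on the
standard `N`-simplex whose vertices are colored with 4 colors with color classes
`|C_0| = |C_1| = |C_2| = r - 1`, `|C_3| = 1`, and whose `N + 1` vertex images are in
general position, the number of unordered colored Tverberg partitions satisfies
`T(f) ≥ 8 · 3^(r - 8)`. -/
theorem tverbergCount_lower_bound_plane (r N : ℕ) (hr : 8 ≤ r)
    (hrp : Nat.Prime r) (hN : N = 3 * (r - 1))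
    (f : (Fin (N + 1) → ℝ) →ᵃ[ℝ] (Fin 2 → ℝ))
    (c : Fin (N + 1) → Fin 4)
    (hc : ∀ j : Fin 4,
      (Finset.univ.filter fun i => c i = j).card = if (j : ℕ) = 3 then 1 else r - 1)
    (hinj : Function.Injective fun i : Fin (N + 1) => f (Pi.single i 1))
    (hgen : GenPos 2 (Set.range fun i : Fin (N + 1) => f (Pi.single i 1))) :
    8 * 3 ^ (r - 8) ≤ tverbergCount 2 N r f c := by
  haveI : Fact r.Prime := ⟨hrp⟩
  obtain ⟨F, hF, hT, hI⟩ := many_assign (V := Fin (N + 1)) hr (by simp [hN]) c hc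
    (fun i => f (Pi.single i 1))
  set Q : (Fin (N + 1) → ZMod r) → Finset (Finset (Fin (N + 1))) := fun j =>
    Finset.univ.image (fun l => Finset.univ.filter (fun i => j i = l)) with hQ
  have hmemQ : ∀ j B, B ∈ Q j ↔ ∃ l, Finset.univ.filter (fun i => j i = l) = B := by
    intro j B
    simp [hQ]
  have hinjQ : Set.InjOn Q F := by
    intro j hj j' hj' h
    have half : ∀ j j' : Fin (N + 1) → ZMod r, Q j = Q j' → ∀ a b, j a = j b → j' a = j' b := by
      intro j j' h a b hab
      have h1 : Finset.univ.filter (fun i => j i = j b) ∈ Q j := (hmemQ _ _).2 ⟨_, rfl⟩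
      rw [h, hmemQ] at h1
      obtain ⟨l, hl⟩ := h1
      have ha : a ∈ Finset.univ.filter (fun i => j i = j b) := by simp [hab]
      have hb : b ∈ Finset.univ.filter (fun i => j i = j b) := by simp
      rw [← hl] at ha hb
      simp only [Finset.mem_filter, Finset.mem_univ, true_and] at ha hb
      rw [ha, hb]
    exact hI j hj j' hj' (fun a b => ⟨half j j' h a b, half j' j h.symm a b⟩)
  rw [← Finset.card_image_of_injOn hinjQ] at hF
  refine hF.trans ?_
  unfold tverbergCount
  rw [← Set.ncard_coe_finset]
  refine Set.ncard_le_ncard ?_ (Set.toFinite _)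
  intro P hP
  obtain ⟨j, hj, rfl⟩ := Finset.mem_image.1 (Finset.mem_coe.1 hP)
  obtain ⟨⟨p, hp⟩, hcol⟩ := hT j hj
  have hne : ∀ l, ∃ i, j i = l := by
    intro l
    have h1 : (convexHull ℝ ((fun i => f (Pi.single i 1)) '' {i | j i = l})).Nonempty :=
      ⟨p, hp l⟩
    rw [convexHull_nonempty_iff, Set.image_nonempty] at h1
    exact h1
  refine ⟨?_, ?_, ?_, ?_, p, ?_⟩
  · rw [hQ]
    simp only
    rw [Finset.card_image_of_injective, Finset.card_univ, ZMod.card]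
    intro l l' h
    obtain ⟨i, hi⟩ := hne l
    have h1 : i ∈ Finset.univ.filter (fun i => j i = l) := by simp [hi]
    have h2 : i ∈ Finset.univ.filter (fun i => j i = l') := by
      have h3 : Finset.univ.filter (fun i => j i = l) = Finset.univ.filter (fun i => j i = l') := h
      rw [← h3]
      exact h1
    simp only [Finset.mem_filter, Finset.mem_univ, true_and] at h2
    rw [← hi, h2]
  · intro B hB B' hB' hBB
    obtain ⟨l, rfl⟩ := (hmemQ _ _).1 hB
    obtain ⟨l', rfl⟩ := (hmemQ _ _).1 hB'
    rw [Finset.disjoint_left]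
    intro i hi hi'
    simp only [Finset.mem_filter, Finset.mem_univ, true_and] at hi hi'
    apply hBB
    rw [← hi, ← hi']
  · ext i
    simp only [Finset.mem_biUnion, Finset.mem_univ, iff_true]
    exact ⟨_, (hmemQ _ _).2 ⟨j i, rfl⟩, by simp⟩
  · intro B hB k
    obtain ⟨l, rfl⟩ := (hmemQ _ _).1 hB
    rw [Finset.card_le_one]
    intro a ha b hb
    simp only [Finset.mem_filter, Finset.mem_univ, true_and] at ha hb
    exact hcol a b (ha.2.trans hb.2.symm) (ha.1.trans hb.1.symm)
  · intro B hB
    obtain ⟨l, rfl⟩ := (hmemQ _ _).1 hB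
    have := hp l
    simpa using this
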